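/- arXiv:1504.01926 — 2 statements merged into one kernel-verified Lean document; each statement's English description precedes it below -/
import Mathlib

section
/- There exists b > 0 such that the following holds. For every η' < η and every probability density ρ on 𝕊 that is Lipschitz on J_z with constant L > 0 for some z ∈ 𝕊, writing ρ_{n,k} = ℒ_{T_{n,k}} ⋯ ℒ_{T_{n,1}} ρ and ρ̂_t for the density of the SRB measure μ̂_{γ_t}, one has ‖ρ_{n,⌊nt⌋} − ρ̂_t‖_{L¹(𝔪)} ≤ C n^{−η'}, and more generally ‖ρ_{n,⌊nt⌋} − ρ̂_s‖_{L¹(𝔪)} ≤ C(n^{−η'} + |t−s|^{η'}), whenever t ≥ b n^{−1} log n; the constant C > 0 depends only on η' and L. -/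
open MeasureTheory Filter Topology Set UniformConvergence

noncomputable section

instance : Fact ((0:ℝ) < 1) := ⟨zero_lt_one⟩

/-- The circle `𝕊 = ℝ/ℤ`. -/
abbrev Circle1 : Type := AddCircle (1 : ℝ)

/-- A `C²` expanding circle map with expansion `≥ lam` and `‖T''‖_∞ ≤ Astar`,
encoded by a lift `F : ℝ → ℝ` satisfying `F (x+1) = F x + deg`. -/
structure CM (lam Astar : ℝ) where
  F : ℝ → ℝ
  deg : ℤ
  lift_add_one : ∀ x : ℝ, F (x + 1) = F x + deg
  contDiff : ContDiff ℝ 2 F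
  expanding : ∀ x : ℝ, lam ≤ deriv F x
  second_bound : ∀ x : ℝ, |deriv (deriv F) x| ≤ Astar

namespace CM

variable {lam Astar : ℝ}

/-- The induced map on the circle. -/
def toMap (T : CM lam Astar) : Circle1 → Circle1 :=
  fun x => (↑(T.F ((AddCircle.equivIco 1 0 x : ℝ))) : Circle1)

/-- The derivative of `T`, as a function on the circle. -/
def dmap (T : CM lam Astar) : Circle1 → ℝ :=
  fun x => deriv T.F ((AddCircle.equivIco 1 0 x : ℝ))

end CM

/-- The `C¹` distance on the space of maps. -/
def dC1 {lam Astar : ℝ} (T₁ T₂ : CM lam Astar) : ℝ :=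
  (⨆ x : Circle1, dist (T₁.toMap x) (T₂.toMap x)) + (⨆ x : Circle1, |T₁.dmap x - T₂.dmap x|)

/-- The transfer operator `ℒ_T h (x) = ∑_{T y = x} h y / T' y`. -/
def transfer {lam Astar : ℝ} (T : CM lam Astar) (h : Circle1 → ℝ) : Circle1 → ℝ :=
  fun x => ∑' y : {y : Circle1 // T.toMap y = x}, h y / T.dmap y

/-- Iterated transfer operators `ℒ_k ⋯ ℒ_1` of the sequence `T_1, T_2, …` (`Ts i = T_i`). -/
def transferIter {lam Astar : ℝ} (Ts : ℕ → CM lam Astar) : ℕ → (Circle1 → ℝ) → (Circle1 → ℝ)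
  | 0, h => h
  | (k+1), h => transfer (Ts (k+1)) (transferIter Ts k h)

/-- Composition `T_k ∘ ⋯ ∘ T_1` as circle maps. -/
def mapIter {lam Astar : ℝ} (Ts : ℕ → CM lam Astar) : ℕ → Circle1 → Circle1
  | 0 => id
  | (k+1) => (Ts (k+1)).toMap ∘ mapIter Ts k

/-- Composition of the lifts `F_k ∘ ⋯ ∘ F_1`. -/
def liftIter {lam Astar : ℝ} (Ts : ℕ → CM lam Astar) : ℕ → ℝ → ℝ
  | 0 => id
  | (k+1) => (Ts (k+1)).F ∘ liftIter Ts k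

/-- A real representative of `z`. -/
def zrep (z : Circle1) : ℝ := (AddCircle.equivIco 1 0 z : ℝ)

/-- The coordinate on the cut circle `J_z = 𝕊 ∖ {z}`. -/
def arcCoord (z x : Circle1) : ℝ := ((AddCircle.equivIoc 1 (zrep z) x : ℝ))

/-- `|x − y|_z`: the length of the subarc of `J_z` connecting `x` and `y`. -/
def arcDist (z x y : Circle1) : ℝ := |arcCoord z x - arcCoord z y|

/-- `g` is Lipschitz on `J_z = 𝕊 ∖ {z}` with constant `L`. -/
def LipOnArc (z : Circle1) (L : ℝ) (g : Circle1 → ℝ) : Prop :=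
  ∀ x y : Circle1, x ≠ z → y ≠ z → |g x - g y| ≤ L * arcDist z x y

/-- A probability density w.r.t. the Haar–Lebesgue measure `𝔪` on the circle. -/
def IsProbDensity (ψ : Circle1 → ℝ) : Prop :=
  Integrable ψ volume ∧ (∫ x : Circle1, ψ x) = 1 ∧ ∀ x, 0 ≤ ψ x

/-- The class `𝒟_L`: positive probability densities whose logarithm is Lipschitz
with constant `L` on `J_z` for some `z`. -/
def memD (L : ℝ) (ψ : Circle1 → ℝ) : Prop :=
  IsProbDensity ψ ∧ (∀ x, 0 < ψ x) ∧ ∃ z : Circle1, LipOnArc z L (fun x => Real.log (ψ x))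

/-- The `L¹(𝔪)` norm. -/
def l1norm (h : Circle1 → ℝ) : ℝ := ∫ x : Circle1, |h x|

/-- The supremum norm. -/
def supNorm (h : Circle1 → ℝ) : ℝ := ⨆ x : Circle1, |h x|

/-- The Lipschitz constant of `h` (w.r.t. the metric of the circle). -/
def lipConst (h : Circle1 → ℝ) : ℝ :=
  sInf {L : ℝ | 0 ≤ L ∧ ∀ x y : Circle1, |h x - h y| ≤ L * dist x y}

/-- The Lipschitz norm `‖h‖_Lip = Lip(h) + ‖h‖_∞`. -/
def lipNorm (h : Circle1 → ℝ) : ℝ := lipConst h + supNorm h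

/-- `ρ` is the density of the SRB measure of `T`: the density of a `T`-invariant
probability measure equivalent to `𝔪`. -/
def IsSRBDensity {lam Astar : ℝ} (T : CM lam Astar) (ρ : Circle1 → ℝ) : Prop :=
  IsProbDensity ρ ∧ (∀ᵐ x : Circle1, 0 < ρ x) ∧
    Measure.map T.toMap (volume.withDensity (fun x => ENNReal.ofReal (ρ x))) =
      volume.withDensity (fun x => ENNReal.ofReal (ρ x))

section QDS

variable {lam Astar : ℝ}

/-- `x_{n,k} = T_{n,k} ∘ ⋯ ∘ T_{n,1}` for a triangular array. -/
def arrIter (Tarr : ℕ → ℕ → CM lam Astar) (n : ℕ) : ℕ → Circle1 → Circle1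
  | 0 => id
  | (k+1) => (Tarr n (k+1)).toMap ∘ arrIter Tarr n k

/-- `ℒ_{n,k} ⋯ ℒ_{n,1}` for a triangular array. -/
def arrTransfer (Tarr : ℕ → ℕ → CM lam Astar) (n : ℕ) : ℕ → (Circle1 → ℝ) → (Circle1 → ℝ)
  | 0, h => h
  | (k+1), h => transfer (Tarr n (k+1)) (arrTransfer Tarr n k h)

/-- `f_{n,k} = f ∘ T_{n,k} ∘ ⋯ ∘ T_{n,1}` evaluated at `x`. -/
def fnk (Tarr : ℕ → ℕ → CM lam Astar) (f : Circle1 → ℝ) (n k : ℕ) (x : Circle1) : ℝ :=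
  f (arrIter Tarr n k x)

/-- `ζₙ(x,t) = n⁻¹ (∑_{k<⌊nt⌋} f_{n,k}(x) + {nt}·f_{n,⌊nt⌋}(x))`. -/
def zetaP (Tarr : ℕ → ℕ → CM lam Astar) (f : Circle1 → ℝ) (n : ℕ) (x : Circle1) (t : ℝ) : ℝ :=
  (n : ℝ)⁻¹ * ((∑ k ∈ Finset.range ⌊(n : ℝ) * t⌋₊, fnk Tarr f n k x) +
    Int.fract ((n : ℝ) * t) * fnk Tarr f n ⌊(n : ℝ) * t⌋₊ x)

/-- `ξₙ(x,t) = √n ζₙ(x,t) − √n μ(ζₙ(·,t))` for a measure `μ`. -/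
def xiP (Tarr : ℕ → ℕ → CM lam Astar) (f : Circle1 → ℝ) (μ : Measure Circle1) (n : ℕ)
    (x : Circle1) (t : ℝ) : ℝ :=
  Real.sqrt n * zetaP Tarr f n x t - Real.sqrt n * ∫ y, zetaP Tarr f n y t ∂μ

/-- The Hölder continuity (exponent `η`) of the curve `γ` on `[0,1]`, w.r.t. `d_{C¹}`. -/
def HolderCurve (η : ℝ) (γ : ℝ → CM lam Astar) : Prop :=
  ∃ H : ℝ, ∀ s ∈ Icc (0:ℝ) 1, ∀ t ∈ Icc (0:ℝ) 1, dC1 (γ s) (γ t) ≤ H * |s - t| ^ η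

/-- The convergence-rate condition `sup_n n^η sup_t d_{C¹}(T_{n,⌊nt⌋}, γ_t) < ∞`. -/
def ArrayApprox (η : ℝ) (γ : ℝ → CM lam Astar) (Tarr : ℕ → ℕ → CM lam Astar) : Prop :=
  ∃ M : ℝ, ∀ n : ℕ, 1 ≤ n → ∀ t ∈ Icc (0:ℝ) 1,
    (n : ℝ) ^ η * dC1 (Tarr n ⌊(n : ℝ) * t⌋₊) (γ t) ≤ M

end QDS

/-- The path space: functions `[0,1] → ℝ` with the topology of uniform convergence;
continuous paths (with the supremum metric) embed isometrically. -/
abbrev PathSpace : Type := (Icc (0:ℝ) 1) →ᵤ ℝ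

instance : MeasurableSpace PathSpace := borel PathSpace

/-- A function `[0,1] → ℝ` (given as a function on `ℝ`) as a point of the path space. -/
def pathOf (g : ℝ → ℝ) : PathSpace := UniformFun.ofFun (fun t => g t)

/-- Evaluation of a path at time `t` (clamped to `[0,1]`). -/
def evalPath (t : ℝ) (ω : PathSpace) : ℝ := UniformFun.toFun ω (projIcc 0 1 zero_le_one t)


section Extra

variable {lam Astar : ℝ}

/-- `μ(ζₙ(·,t))` for the measure with density `ρ` w.r.t. `𝔪`. -/
def zetaMean (Tarr : ℕ → ℕ → CM lam Astar) (f : Circle1 → ℝ) (ρ : Circle1 → ℝ)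
    (n : ℕ) (t : ℝ) : ℝ :=
  ∫ y : Circle1, zetaP Tarr f n y t * ρ y

/-- `𝔪(ζₙ(·,t))`, the mean w.r.t. the Lebesgue measure. -/
def zetaMeanM (Tarr : ℕ → ℕ → CM lam Astar) (f : Circle1 → ℝ) (n : ℕ) (t : ℝ) : ℝ :=
  ∫ y : Circle1, zetaP Tarr f n y t

/-- `ξₙ(x,t) = √n ζₙ(x,t) − √n μ(ζₙ(·,t))`, where `μ` has density `ρ`. -/
def xiD (Tarr : ℕ → ℕ → CM lam Astar) (f : Circle1 → ℝ) (ρ : Circle1 → ℝ)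
    (n : ℕ) (x : Circle1) (t : ℝ) : ℝ :=
  Real.sqrt n * zetaP Tarr f n x t - Real.sqrt n * zetaMean Tarr f ρ n t

end Extra

/-- The σ-algebra `𝔉_t` on the path space, generated by the evaluations at times `s ∈ [0,t]`. -/
def pathFiltration (t : ℝ) : MeasurableSpace PathSpace :=
  ⨆ (s : ℝ) (_ : 0 ≤ s ∧ s ≤ t), MeasurableSpace.comap (evalPath s) (borel ℝ)

/-- The process `M_t(ω) = A(ω(t)) − A(ω(0)) − ½∫₀ᵗ σ̂ₛ²·A''(ω(s)) ds`. -/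
def MGproc (σ2 : ℝ → ℝ) (A : ℝ → ℝ) (t : ℝ) (ω : PathSpace) : ℝ :=
  A (evalPath t ω) - A (evalPath 0 ω) -
    (1/2) * ∫ s in (0:ℝ)..t, σ2 s * deriv (deriv A) (evalPath s ω)

/-- `P` solves the martingale problem on `C⁰([0,1],ℝ)` for the generator `½σ̂ₜ² d²/dx²`,
started at `0`:  `P` is a probability measure, concentrated on continuous paths starting at `0`,
and for every `A ∈ C_c^∞(ℝ)` the process `MGproc σ2 A` is a `P`-martingale w.r.t. the
natural filtration `𝔉_t`.  -/
def SolvesMartingaleProblem (σ2 : ℝ → ℝ) (P : Measure PathSpace) : Prop :=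
  IsProbabilityMeasure P ∧
  P {ω : PathSpace | evalPath 0 ω = 0} = 1 ∧
  P {ω : PathSpace | Continuous (UniformFun.toFun ω)} = 1 ∧
  ∀ A : ℝ → ℝ, ContDiff ℝ (⊤ : ℕ∞) A → HasCompactSupport A →
    (∀ t ∈ Icc (0:ℝ) 1, Integrable (MGproc σ2 A t) P) ∧
    (∀ t ∈ Icc (0:ℝ) 1, @Measurable PathSpace ℝ (pathFiltration t) _ (MGproc σ2 A t)) ∧
    (∀ s ∈ Icc (0:ℝ) 1, ∀ t ∈ Icc (0:ℝ) 1, s ≤ t →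
      P[MGproc σ2 A t | pathFiltration s] =ᵐ[P] MGproc σ2 A s)

end

open MeasureTheory Filter Topology Set UniformConvergence

namespace QDSproof

variable {lam Astar : ℝ}

theorem F_diff (T : CM lam Astar) : Differentiable ℝ T.F :=
  T.contDiff.differentiable (by norm_num)

theorem F'_diff (T : CM lam Astar) : Differentiable ℝ (deriv T.F) := by
  have h : ContDiff ℝ (1+1) T.F := by
    have := T.contDiff
    norm_num; exact this
  exact ((contDiff_succ_iff_deriv.1 h).2.2).differentiable (by norm_num)

theorem F_exp (T : CM lam Astar) {x y : ℝ} (h : x ≤ y) : lam * (y - x) ≤ T.F y - T.F x :=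
  mul_sub_le_image_sub_of_le_deriv (F_diff T) T.expanding h

theorem F_abs (T : CM lam Astar) (x y : ℝ) : lam * |x - y| ≤ |T.F x - T.F y| := by
  rcases le_total x y with h | h
  · rw [abs_sub_comm x y, abs_sub_comm (T.F x), abs_of_nonneg (sub_nonneg.2 h)]
    exact (F_exp T h).trans (le_abs_self _)
  · rw [abs_of_nonneg (sub_nonneg.2 h)]
    exact (F_exp T h).trans (le_abs_self _)

theorem F'_lip (T : CM lam Astar) (x y : ℝ) :
    |deriv T.F x - deriv T.F y| ≤ Astar * |x - y| := by
  have := Convex.norm_image_sub_le_of_norm_deriv_le (f := deriv T.F) (s := univ) (C := Astar)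
    (x := y) (y := x) (fun z _ => F'_diff T z) (fun z _ => T.second_bound z) convex_univ
    (mem_univ _) (mem_univ _)
  simpa using this

theorem F_mono (hl : 1 < lam) (T : CM lam Astar) : StrictMono T.F := by
  intro x y h
  have := F_exp T h.le
  nlinarith

theorem F'_pos (hl : 1 < lam) (T : CM lam Astar) (x : ℝ) : 1 < deriv T.F x :=
  hl.trans_le (T.expanding x)

theorem F_add_nat (T : CM lam Astar) (x : ℝ) (n : ℕ) : T.F (x + n) = T.F x + n * T.deg := by
  induction n with
  | zero => simp
  | succ k ih =>
    have := T.lift_add_one (x + k)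
    push_cast
    rw [← add_assoc, this, ih]; ring

theorem F_add_int (T : CM lam Astar) (x : ℝ) (n : ℤ) : T.F (x + n) = T.F x + n * T.deg := by
  obtain ⟨k, rfl | rfl⟩ := n.eq_nat_or_neg
  · simpa using F_add_nat T x k
  · have := F_add_nat T (x - k) k
    simp only [sub_add_cancel] at this
    push_cast
    rw [this, ← sub_eq_add_neg]; ring

theorem F'_per (T : CM lam Astar) : Function.Periodic (deriv T.F) 1 := by
  intro x
  have : (fun y => T.F (y + 1)) = fun y => T.F y + T.deg := by
    funext y; exact T.lift_add_one y
  have h2 := congrArg (fun f => deriv f x) this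
  simpa [deriv_comp_add_const] using h2

theorem deg_gt (hl : 1 < lam) (T : CM lam Astar) : (1:ℝ) < T.deg := by
  have h1 := T.lift_add_one 0
  have h2 := F_exp T (x := 0) (y := 0 + 1) (by norm_num)
  rw [h1] at h2
  linarith

theorem deg_cast (hl : 1 < lam) (T : CM lam Astar) : ((T.deg.toNat : ℕ) : ℝ) = T.deg := by
  have h := deg_gt hl T
  have h0 : 0 ≤ T.deg := by
    have : (1:ℤ) < T.deg := by exact_mod_cast h
    omega
  have : ((T.deg.toNat : ℤ)) = T.deg := Int.toNat_of_nonneg h0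
  exact_mod_cast this

theorem F_surj (hl : 1 < lam) (T : CM lam Astar) : Function.Surjective T.F := by
  apply (F_diff T).continuous.surjective
  · apply tendsto_atTop_mono' atTop (f₁ := fun x => T.F 0 + x)
    · filter_upwards [eventually_ge_atTop 0] with x hx
      have := F_exp T hx
      nlinarith
    · exact tendsto_atTop_add_const_left _ _ tendsto_id
  · apply tendsto_atBot_mono' atBot (f₁ := fun x => T.F 0 + x)
    · filter_upwards [eventually_le_atBot 0] with x hx
      have := F_exp T hx
      nlinarith
    · exact tendsto_atBot_add_const_left _ _ tendsto_id

/-- inverse of the lift -/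
noncomputable def Gi (T : CM lam Astar) : ℝ → ℝ := Function.invFun T.F

theorem F_Gi (hl : 1 < lam) (T : CM lam Astar) (y : ℝ) : T.F (Gi T y) = y :=
  Function.rightInverse_invFun (F_surj hl T) y

theorem Gi_F (hl : 1 < lam) (T : CM lam Astar) (y : ℝ) : Gi T (T.F y) = y :=
  Function.leftInverse_invFun (F_mono hl T).injective y

theorem Gi_deg (hl : 1 < lam) (T : CM lam Astar) (y : ℝ) : Gi T (y + T.deg) = Gi T y + 1 := by
  apply (F_mono hl T).injective
  rw [F_Gi hl, T.lift_add_one, F_Gi hl]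

theorem Gi_lip (hl : 1 < lam) (T : CM lam Astar) (x y : ℝ) :
    lam * |Gi T x - Gi T y| ≤ |x - y| := by
  have := F_abs T (Gi T x) (Gi T y)
  rwa [F_Gi hl, F_Gi hl] at this

theorem Gi_mono (hl : 1 < lam) (T : CM lam Astar) : StrictMono (Gi T) := by
  intro x y h
  by_contra hc
  have := (F_mono hl T).monotone (not_lt.1 hc)
  rw [F_Gi hl, F_Gi hl] at this
  linarith

/-- a single branch term -/
noncomputable def wt (T : CM lam Astar) (u : ℝ → ℝ) (y : ℝ) : ℝ := u (Gi T y) / deriv T.F (Gi T y)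

/-- transfer operator on the lift -/
noncomputable def Lop (T : CM lam Astar) (u : ℝ → ℝ) (x : ℝ) : ℝ :=
  ∑ j ∈ Finset.range T.deg.toNat, wt T u (x + j)

theorem wt_deg (hl : 1 < lam) (T : CM lam Astar) {u : ℝ → ℝ} (hu : Function.Periodic u 1) (y : ℝ) :
    wt T u (y + T.deg) = wt T u y := by
  unfold wt
  rw [Gi_deg hl, hu, F'_per T]

theorem Lop_per (hl : 1 < lam) (T : CM lam Astar) {u : ℝ → ℝ} (hu : Function.Periodic u 1) :
    Function.Periodic (Lop T u) 1 := by
  intro x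
  unfold Lop
  have h1 := Finset.sum_range_succ (fun j : ℕ => wt T u (x + j)) T.deg.toNat
  have h2 := Finset.sum_range_succ' (fun j : ℕ => wt T u (x + j)) T.deg.toNat
  rw [deg_cast hl, wt_deg hl T hu] at h1
  simp only [Nat.cast_zero, add_zero] at h2
  have h3 : ∀ j : ℕ, x + 1 + (j:ℝ) = x + ((j + 1 : ℕ) : ℝ) := by
    intro j; push_cast; ring
  simp_rw [h3]
  linarith

/-- test functions -/
structure Tst (φ : ℝ → ℝ) : Prop where
  meas : Measurable φ
  per : Function.Periodic φ 1
  bdd : ∀ x, |φ x| ≤ 1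

theorem per_int {φ : ℝ → ℝ} (h : Function.Periodic φ 1) (x : ℝ) (n : ℤ) : φ (x + n) = φ x := by
  have := h.int_mul n x
  simpa using this

theorem Tst.comp {φ : ℝ → ℝ} (h : Tst φ) (T : CM lam Astar) : Tst (fun x => φ (T.F x)) where
  meas := h.meas.comp (F_diff T).continuous.measurable
  per := by
    intro x
    change φ (T.F (x+1)) = φ (T.F x)
    rw [T.lift_add_one, per_int h.per]
  bdd := fun x => h.bdd _

/-- locally integrable, periodic -/
structure PI (u : ℝ → ℝ) : Prop where
  per : Function.Periodic u 1
  int : ∀ a b : ℝ, IntervalIntegrable u volume a b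

theorem II_mul {u φ : ℝ → ℝ} {a b : ℝ} (hu : IntervalIntegrable u volume a b) (hφ : Tst φ) :
    IntervalIntegrable (fun x => u x * φ x) volume a b := by
  constructor
  · exact hu.1.mul_bdd (c := 1) hφ.meas.aestronglyMeasurable (Eventually.of_forall hφ.bdd)
  · exact hu.2.mul_bdd (c := 1) hφ.meas.aestronglyMeasurable (Eventually.of_forall hφ.bdd)

theorem PI.of_cont {u : ℝ → ℝ} (h : Function.Periodic u 1) (hc : Continuous u) : PI u :=
  ⟨h, fun a b => hc.intervalIntegrable a b⟩

theorem image_Ioc (hl : 1 < lam) (T : CM lam Astar) :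
    T.F '' (Ioc (Gi T 0) (Gi T 0 + 1)) = Ioc 0 (T.deg : ℝ) := by
  ext y
  constructor
  · rintro ⟨x, ⟨h1, h2⟩, rfl⟩
    refine ⟨?_, ?_⟩
    · have := F_mono hl T h1; rwa [F_Gi hl] at this
    · have := (F_mono hl T).monotone h2
      rw [T.lift_add_one, F_Gi hl] at this; linarith
  · rintro ⟨h1, h2⟩
    refine ⟨Gi T y, ⟨Gi_mono hl T h1, ?_⟩, F_Gi hl T y⟩
    rw [← Gi_deg hl, zero_add]
    exact (Gi_mono hl T).monotone h2

theorem wt_F (hl : 1 < lam) (T : CM lam Astar) (u : ℝ → ℝ) (x : ℝ) :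
    deriv T.F x * wt T u (T.F x) = u x := by
  unfold wt
  rw [Gi_F hl]
  have := F'_pos hl T x
  field_simp

theorem wt_int (hl : 1 < lam) (T : CM lam Astar) {u : ℝ → ℝ} (hu : PI u) :
    IntegrableOn (wt T u) (Ioc 0 (T.deg : ℝ)) := by
  rw [← image_Ioc hl, integrableOn_image_iff_integrableOn_deriv_smul_of_monotoneOn
    (f' := deriv T.F) measurableSet_Ioc
    (fun x _ => ((F_diff T) x).hasDerivAt.hasDerivWithinAt) ((F_mono hl T).monotone.monotoneOn _)]
  simp only [smul_eq_mul, wt_F hl]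
  exact (intervalIntegrable_iff_integrableOn_Ioc_of_le (by linarith)).1 (hu.int _ _)

theorem wt_II (hl : 1 < lam) (T : CM lam Astar) {u : ℝ → ℝ} (hu : PI u) (k : ℕ)
    (hk : k < T.deg.toNat) : IntervalIntegrable (wt T u) volume (k:ℝ) ((k+1 : ℕ):ℝ) := by
  rw [intervalIntegrable_iff_integrableOn_Ioc_of_le (by push_cast; linarith)]
  apply (wt_int hl T hu).mono_set
  apply Ioc_subset_Ioc (by positivity)
  rw [← deg_cast hl]
  exact_mod_cast hk

theorem Lop_PI (hl : 1 < lam) (T : CM lam Astar) {u : ℝ → ℝ} (hu : PI u) : PI (Lop T u) := by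
  have hp := Lop_per hl T hu.per
  refine ⟨hp, fun a b => ?_⟩
  apply hp.intervalIntegrable (t := 0) (by norm_num)
  have : IntervalIntegrable (∑ j ∈ Finset.range T.deg.toNat, fun x : ℝ => wt T u (x + j))
      volume 0 (0+1) := by
    apply IntervalIntegrable.sum
    intro j hj
    have := (wt_II hl T hu j (Finset.mem_range.1 hj)).comp_add_right (j:ℝ)
    simpa using this
  convert this using 1
  funext x
  simp [Lop]

theorem dual (hl : 1 < lam) (T : CM lam Astar) {u φ : ℝ → ℝ} (hu : PI u) (hφ : Tst φ) :
    ∫ x in (0:ℝ)..1, Lop T u x * φ x = ∫ x in (0:ℝ)..1, u x * φ (T.F x) := by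
  have e1 : ∀ x, Lop T u x * φ x =
      ∑ j ∈ Finset.range T.deg.toNat, (wt T u (x + j) * φ (x + j)) := by
    intro x
    rw [Lop, Finset.sum_mul]
    refine Finset.sum_congr rfl fun j _ => ?_
    have := per_int hφ.per x j
    simp only [Int.cast_natCast] at this
    rw [this]
  simp_rw [e1]
  have hI : ∀ j < T.deg.toNat, IntervalIntegrable (fun x => wt T u x * φ x) volume
      (j:ℝ) ((j+1:ℕ):ℝ) := fun j hj => II_mul (wt_II hl T hu j hj) hφ
  rw [intervalIntegral.integral_finsetSum]
  · have e2 : ∀ j : ℕ, ∫ x in (0:ℝ)..1, wt T u (x + j) * φ (x + j) =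
        ∫ x in (j:ℝ)..((j+1:ℕ):ℝ), wt T u x * φ x := by
      intro j
      rw [intervalIntegral.integral_comp_add_right (fun x => wt T u x * φ x)]
      push_cast; rw [zero_add, add_comm]
    simp_rw [e2]
    rw [intervalIntegral.sum_integral_adjacent_intervals (a := fun k : ℕ => (k:ℝ)) hI]
    rw [deg_cast hl, Nat.cast_zero, intervalIntegral.integral_of_le
      (by linarith [deg_gt hl T]), ← image_Ioc hl,
      integral_image_eq_integral_deriv_smul_of_monotoneOn (f' := deriv T.F) measurableSet_Ioc
      (fun x _ => ((F_diff T) x).hasDerivAt.hasDerivWithinAt)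
      ((F_mono hl T).monotone.monotoneOn _)]
    simp only [smul_eq_mul, ← mul_assoc, wt_F hl]
    rw [← intervalIntegral.integral_of_le (by linarith)]
    have hp : Function.Periodic (fun x => u x * φ (T.F x)) 1 := by
      intro x
      have := (hφ.comp T).per x
      simp only [this, hu.per x]
    rw [hp.intervalIntegral_add_eq (Gi T 0) 0, zero_add]
  · intro j hj
    have := (hI j (Finset.mem_range.1 hj)).comp_add_right (j:ℝ)
    simpa using this

end QDSproof

open MeasureTheory Filter Topology Set UniformConvergence

namespace QDSproof

variable {lam Astar : ℝ}

/-- cone of log-Lipschitz functions -/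
structure Kc (a : ℝ) (u : ℝ → ℝ) : Prop where
  per : Function.Periodic u 1
  nonneg : ∀ x, 0 ≤ u x
  ineq : ∀ x y, u x ≤ Real.exp (a * |x - y|) * u y

theorem Kc.cont {a : ℝ} {u : ℝ → ℝ} (h : Kc a u) : Continuous u := by
  rw [continuous_iff_continuousAt]
  intro y
  have hE : Continuous (fun x : ℝ => Real.exp (a * |x - y|) * u y) := by fun_prop
  have hE' : Continuous (fun x : ℝ => Real.exp (-(a * |x - y|)) * u y) := by fun_prop
  have t1 := hE.tendsto y
  have t2 := hE'.tendsto y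
  simp only [sub_self, abs_zero, mul_zero, neg_zero, Real.exp_zero, one_mul] at t1 t2
  refine tendsto_of_tendsto_of_tendsto_of_le_of_le t2 t1 (fun x => ?_) (fun x => h.ineq x y)
  have := h.ineq y x
  simp only
  rw [abs_sub_comm] at this
  rw [Real.exp_neg, inv_mul_le_iff₀ (Real.exp_pos _)]
  exact this

theorem Kc.PI {a : ℝ} {u : ℝ → ℝ} (h : Kc a u) : PI u := PI.of_cont h.per h.cont

theorem PI.shift {u : ℝ → ℝ} (h : PI u) (x : ℝ) :
    ∫ y in (0:ℝ)..1, u y = ∫ y in x..(x+1), u y := by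
  rw [h.per.intervalIntegral_add_eq x 0, zero_add]

theorem Kc.ge_int {a : ℝ} (ha : 0 ≤ a) {u : ℝ → ℝ} (h : Kc a u) (x : ℝ) :
    Real.exp (-a) * ∫ y in (0:ℝ)..1, u y ≤ u x := by
  rw [Real.exp_neg, inv_mul_le_iff₀ (Real.exp_pos _), h.PI.shift x]
  have : ∫ y in x..(x+1), u y ≤ ∫ y in x..(x+1), Real.exp a * u x := by
    apply intervalIntegral.integral_mono_on (by linarith) (h.PI.int _ _) (by simp)
    intro y hy
    refine (h.ineq y x).trans ?_
    apply mul_le_mul_of_nonneg_right _ (h.nonneg x)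
    apply Real.exp_le_exp.2
    have : |y - x| ≤ 1 := by rw [abs_le]; constructor <;> linarith [hy.1, hy.2]
    nlinarith
  simpa using this

theorem Kc.le_int {a : ℝ} (ha : 0 ≤ a) {u : ℝ → ℝ} (h : Kc a u) (x : ℝ) :
    u x ≤ Real.exp a * ∫ y in (0:ℝ)..1, u y := by
  rw [h.PI.shift x]
  have : ∫ y in x..(x+1), u x ≤ ∫ y in x..(x+1), Real.exp a * u y := by
    apply intervalIntegral.integral_mono_on (by linarith) (by simp)
      ((h.PI.int _ _).const_mul _)
    intro y hy
    refine (h.ineq x y).trans ?_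
    apply mul_le_mul_of_nonneg_right _ (h.nonneg y)
    apply Real.exp_le_exp.2
    have : |x - y| ≤ 1 := by rw [abs_le]; constructor <;> linarith [hy.1, hy.2]
    nlinarith
  simpa using this

theorem Tst_one : Tst (fun _ => (1:ℝ)) := ⟨measurable_const, fun _ => rfl, by simp⟩

theorem Lop_int (hl : 1 < lam) (T : CM lam Astar) {u : ℝ → ℝ} (hu : PI u) :
    ∫ x in (0:ℝ)..1, Lop T u x = ∫ x in (0:ℝ)..1, u x := by
  simpa using dual hl T hu Tst_one

theorem Lop_Kc (hl : 1 < lam) (hA : 0 < Astar) (T : CM lam Astar) {a : ℝ} (ha : 0 ≤ a)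
    {u : ℝ → ℝ} (hu : Kc a u) : Kc (a / lam + Astar) (Lop T u) where
  per := Lop_per hl T hu.per
  nonneg := fun x => Finset.sum_nonneg fun j _ => by
    have := F'_pos hl T (Gi T (x + j))
    have := hu.nonneg (Gi T (x + j))
    unfold wt; positivity
  ineq := by
    intro x y
    unfold Lop
    rw [Finset.mul_sum]
    refine Finset.sum_le_sum fun j _ => ?_
    unfold wt
    set p := Gi T (x + j) with hp
    set q := Gi T (y + j) with hq
    have h1 := F'_pos hl T p
    have h2 := F'_pos hl T q
    have hpq : lam * |p - q| ≤ |x - y| := by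
      have := Gi_lip hl T (x + j) (y + j)
      simpa using this
    have hpq' : |p - q| ≤ |x - y| := by nlinarith [abs_nonneg (p - q)]
    have hd : deriv T.F q ≤ Real.exp (Astar * |x - y|) * deriv T.F p := by
      have h3 := (abs_le.1 (F'_lip T p q)).1
      have h4 := Real.add_one_le_exp (Astar * |x - y|)
      have h5 : 0 ≤ Astar * |x-y| := by positivity
      have h6 : Astar * |p - q| ≤ Astar * |x - y| := by gcongr
      calc deriv T.F q ≤ deriv T.F p + Astar * |x - y| := by linarith
        _ ≤ (Astar * |x - y| + 1) * deriv T.F p := by nlinarith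
        _ ≤ _ := by gcongr
    have hu1 : u p ≤ Real.exp (a / lam * |x - y|) * u q := by
      refine (hu.ineq p q).trans ?_
      apply mul_le_mul_of_nonneg_right _ (hu.nonneg q)
      apply Real.exp_le_exp.2
      have : |p - q| ≤ |x - y| / lam := by
        rw [le_div_iff₀ (by linarith)]; linarith
      calc a * |p - q| ≤ a * (|x - y| / lam) := by gcongr
        _ = _ := by ring
    rw [div_le_iff₀ (by linarith)]
    calc u p ≤ Real.exp (a / lam * |x - y|) * u q := hu1
      _ = Real.exp (a / lam * |x - y|) * (u q / deriv T.F q) * deriv T.F q := by field_simp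
      _ ≤ Real.exp (a / lam * |x - y|) * (u q / deriv T.F q) *
          (Real.exp (Astar * |x - y|) * deriv T.F p) := by
          have := hu.nonneg q
          gcongr
      _ = _ := by rw [add_mul, Real.exp_add]; ring

theorem Kc.mono {a b : ℝ} (hab : a ≤ b) {u : ℝ → ℝ} (h : Kc a u) : Kc b u where
  per := h.per
  nonneg := h.nonneg
  ineq := fun x y => (h.ineq x y).trans (by
    have := h.nonneg y
    gcongr)

theorem Kc.sub {a a' : ℝ} (h0 : 0 ≤ a') (haa : a' < a) {u : ℝ → ℝ} (h : Kc a' u) :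
    Kc a (fun x => u x - (1 - a'/a) * Real.exp (-a') * ∫ y in (0:ℝ)..1, u y) := by
  have ha : 0 < a := by linarith
  set α := (1 - a'/a) * Real.exp (-a') * ∫ y in (0:ℝ)..1, u y with hα
  have hq1 : 0 ≤ a'/a := by positivity
  have hq2 : a'/a ≤ 1 := by rw [div_le_one ha]; exact haa.le
  have hle : ∀ y, α ≤ (1 - a'/a) * u y := by
    intro y
    have := h.ge_int h0 y
    rw [hα, mul_assoc]
    exact mul_le_mul_of_nonneg_left this (by linarith)
  refine ⟨fun x => by simp only [h.per x], fun x => ?_, fun x y => ?_⟩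
  · have := hle x
    have := h.nonneg x
    nlinarith
  · have h1 := h.ineq x y
    have h2 := hle y
    have h3 := h.nonneg y
    have hconv : Real.exp (a' * |x-y|) ≤ a'/a * Real.exp (a * |x-y|) + (1 - a'/a) := by
      have := convexOn_exp.2 (mem_univ (a * |x - y|)) (mem_univ (0:ℝ)) hq1
        (by linarith : 0 ≤ 1 - a'/a) (by ring)
      simp only [smul_eq_mul, mul_zero, add_zero, Real.exp_zero, mul_one] at this
      have e : a'/a * (a * |x-y|) = a' * |x-y| := by field_simp
      rwa [e] at this
    have hE : 1 ≤ Real.exp (a * |x-y|) := Real.one_le_exp (by positivity)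
    have : (Real.exp (a * |x-y|) - 1) * α ≤ (Real.exp (a * |x-y|) - 1) * ((1 - a'/a) * u y) :=
      mul_le_mul_of_nonneg_left h2 (by linarith)
    have h5 := mul_le_mul_of_nonneg_right hconv h3
    nlinarith

/-- cone parameter -/
noncomputable def ca (lam Astar : ℝ) : ℝ := 2 * Astar * lam / (lam - 1)

/-- contraction factor -/
noncomputable def th (lam Astar : ℝ) : ℝ :=
  1 - (1 - (ca lam Astar - Astar) / ca lam Astar) * Real.exp (-(ca lam Astar - Astar))

theorem ca_gt (hl : 1 < lam) (hA : 0 < Astar) : Astar < ca lam Astar := by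
  unfold ca
  rw [lt_div_iff₀ (by linarith)]
  nlinarith

theorem ca_eq (hl : 1 < lam) : ca lam Astar / lam + Astar = ca lam Astar - Astar := by
  unfold ca
  have : lam - 1 ≠ 0 := by linarith
  field_simp
  ring

theorem th_mem (hl : 1 < lam) (hA : 0 < Astar) : 0 < th lam Astar ∧ th lam Astar < 1 := by
  have h := ca_gt hl hA
  have h1 : 0 < ca lam Astar := by linarith
  have h2 : 1 - (ca lam Astar - Astar) / ca lam Astar = Astar / ca lam Astar := by
    field_simp; ring
  unfold th
  rw [h2]
  have h3 : Astar / ca lam Astar < 1 := by rw [div_lt_one h1]; exact h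
  have h4 : 0 < Astar / ca lam Astar := by positivity
  have h5 : Real.exp (-(ca lam Astar - Astar)) < 1 := by
    rw [← Real.exp_zero]; exact Real.exp_lt_exp.2 (by linarith)
  have h6 := Real.exp_pos (-(ca lam Astar - Astar))
  constructor <;> nlinarith

/-- pull-back of a test function along a list of maps (head is applied first) -/
def pull : List (CM lam Astar) → (ℝ → ℝ) → (ℝ → ℝ)
  | [], φ => φ
  | T :: l, φ => fun x => pull l φ (T.F x)

theorem pull_append (l1 l2 : List (CM lam Astar)) (φ : ℝ → ℝ) :
    pull (l1 ++ l2) φ = pull l1 (pull l2 φ) := by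
  induction l1 with
  | nil => rfl
  | cons T l ih => simp [pull, ih]

theorem pull_Tst (l : List (CM lam Astar)) {φ : ℝ → ℝ} (h : Tst φ) : Tst (pull l φ) := by
  induction l with
  | nil => exact h
  | cons T l ih => exact ih.comp T

/-- iterated operator -/
noncomputable def Lit : List (CM lam Astar) → (ℝ → ℝ) → (ℝ → ℝ)
  | [], u => u
  | T :: l, u => Lit l (Lop T u)

theorem Lop_Kc' (hl : 1 < lam) (hA : 0 < Astar) (T : CM lam Astar)
    {u : ℝ → ℝ} (hu : Kc (ca lam Astar) u) : Kc (ca lam Astar - Astar) (Lop T u) := by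
  have := ca_gt hl hA
  rw [← ca_eq hl]
  exact Lop_Kc hl hA T (by linarith) hu

theorem Lop_Kc'' (hl : 1 < lam) (hA : 0 < Astar) (T : CM lam Astar)
    {u : ℝ → ℝ} (hu : Kc (ca lam Astar) u) : Kc (ca lam Astar) (Lop T u) :=
  (Lop_Kc' hl hA T hu).mono (by linarith)

theorem Lit_Kc (hl : 1 < lam) (hA : 0 < Astar) (l : List (CM lam Astar)) :
    ∀ {u : ℝ → ℝ}, Kc (ca lam Astar) u → Kc (ca lam Astar) (Lit l u) := by
  induction l with
  | nil => intro u h; exact h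
  | cons T l ih => intro u h; exact ih (Lop_Kc'' hl hA T h)

theorem Lit_int (hl : 1 < lam) (l : List (CM lam Astar)) :
    ∀ {u : ℝ → ℝ}, PI u → ∫ x in (0:ℝ)..1, Lit l u x = ∫ x in (0:ℝ)..1, u x := by
  induction l with
  | nil => intro u h; rfl
  | cons T l ih => intro u h; rw [Lit, ih (Lop_PI hl T h), Lop_int hl T h]

theorem dual_list (hl : 1 < lam) (l : List (CM lam Astar)) {φ : ℝ → ℝ} (hφ : Tst φ) :
    ∀ {u : ℝ → ℝ}, PI u →
    ∫ x in (0:ℝ)..1, Lit l u x * φ x = ∫ x in (0:ℝ)..1, u x * pull l φ x := by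
  induction l with
  | nil => intro u h; rfl
  | cons T l ih =>
    intro u h
    rw [Lit, ih (Lop_PI hl T h), dual hl T h (pull_Tst l hφ)]
    rfl

theorem PI.sub {u v : ℝ → ℝ} (hu : PI u) (hv : PI v) : PI (fun x => u x - v x) where
  per := fun x => by simp only [hu.per x, hv.per x]
  int := fun a b => (hu.int a b).sub (hv.int a b)

theorem PI.const (c : ℝ) : PI (fun _ => c) := ⟨fun _ => rfl, fun a b => by simp⟩

theorem int_sub_mul {u v φ : ℝ → ℝ} (hu : PI u) (hv : PI v) (hφ : Tst φ) :
    ∫ x in (0:ℝ)..1, (u x - v x) * φ x =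
      (∫ x in (0:ℝ)..1, u x * φ x) - ∫ x in (0:ℝ)..1, v x * φ x := by
  rw [← intervalIntegral.integral_sub (II_mul (hu.int _ _) hφ) (II_mul (hv.int _ _) hφ)]
  simp only [sub_mul]

theorem abs_int_le {u φ : ℝ → ℝ} (hu : PI u) (hφ : Tst φ) :
    |∫ x in (0:ℝ)..1, u x * φ x| ≤ ∫ x in (0:ℝ)..1, |u x| := by
  refine (intervalIntegral.abs_integral_le_integral_abs (by norm_num)).trans ?_
  apply intervalIntegral.integral_mono_on (by norm_num) (II_mul (hu.int _ _) hφ).abs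
    (hu.int _ _).abs
  intro x _
  rw [abs_mul]
  exact mul_le_of_le_one_right (abs_nonneg _) (hφ.bdd x)

theorem memory_loss (hl : 1 < lam) (hA : 0 < Astar) {φ : ℝ → ℝ} (hφ : Tst φ)
    (l : List (CM lam Astar)) : ∀ {u v : ℝ → ℝ} {c : ℝ},
    Kc (ca lam Astar) u → Kc (ca lam Astar) v →
    ∫ x in (0:ℝ)..1, u x = c → ∫ x in (0:ℝ)..1, v x = c →
    |∫ x in (0:ℝ)..1, (u x - v x) * pull l φ x| ≤ 2 * c * th lam Astar ^ l.length := by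
  induction l with
  | nil =>
    intro u v c hu hv hcu hcv
    refine (abs_int_le (hu.PI.sub hv.PI) hφ).trans ?_
    have : ∫ x in (0:ℝ)..1, |u x - v x| ≤ ∫ x in (0:ℝ)..1, (u x + v x) := by
      apply intervalIntegral.integral_mono_on (by norm_num) ((hu.PI.sub hv.PI).int _ _).abs
        ((hu.PI.int _ _).add (hv.PI.int _ _))
      intro x _
      rw [abs_le]; constructor <;> linarith [hu.nonneg x, hv.nonneg x]
    rw [intervalIntegral.integral_add (hu.PI.int _ _) (hv.PI.int _ _), hcu, hcv] at this
    simp only [List.length_nil, pow_zero]; linarith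
  | cons T l ih =>
    intro u v c hu hv hcu hcv
    have hca := ca_gt hl hA
    have hu' := (Lop_Kc' hl hA T hu).sub (a := ca lam Astar) (by linarith) (by linarith)
    have hv' := (Lop_Kc' hl hA T hv).sub (a := ca lam Astar) (by linarith) (by linarith)
    rw [Lop_int hl T hu.PI, hcu] at hu'
    rw [Lop_int hl T hv.PI, hcv] at hv'
    set β := (1 - (ca lam Astar - Astar) / ca lam Astar) * Real.exp (-(ca lam Astar - Astar))
      with hβ
    have hI : ∀ {w : ℝ → ℝ}, PI w → ∫ x in (0:ℝ)..1, w x = c →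
        ∫ x in (0:ℝ)..1, (Lop T w x - β * c) = th lam Astar * c := by
      intro w hw hc
      rw [intervalIntegral.integral_sub ((Lop_PI hl T hw).int _ _) (by simp), Lop_int hl T hw, hc]
      have hth : th lam Astar = 1 - β := rfl
      rw [hth, intervalIntegral.integral_const]
      simp only [sub_zero, one_smul]; ring
    have key := ih hu' hv' (hI hu.PI hcu) (hI hv.PI hcv)
    have e : ∫ x in (0:ℝ)..1, (u x - v x) * pull (T :: l) φ x =
        ∫ x in (0:ℝ)..1, ((Lop T u x - β * c) - (Lop T v x - β * c)) * pull l φ x := by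
      have hp := pull_Tst l hφ
      have hp' := pull_Tst (T :: l) hφ
      simp only [sub_sub_sub_cancel_right]
      rw [int_sub_mul hu.PI hv.PI hp', int_sub_mul (Lop_PI hl T hu.PI) (Lop_PI hl T hv.PI) hp,
        dual hl T hu.PI hp, dual hl T hv.PI hp]
      rfl
    rw [e]
    refine key.trans (le_of_eq ?_)
    rw [List.length_cons, pow_succ]; ring

theorem lip_decay (hl : 1 < lam) (hA : 0 < Astar) {φ : ℝ → ℝ} (hφ : Tst φ)
    (l : List (CM lam Astar)) {v : ℝ → ℝ} {ℓ : ℝ} (h0 : 0 ≤ ℓ)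
    (hp : Function.Periodic v 1) (hv : ∀ x y, |v x - v y| ≤ ℓ * |x - y|) :
    |∫ x in (0:ℝ)..1, (v x - ∫ y in (0:ℝ)..1, v y) * pull l φ x| ≤
      2 * (ℓ + ℓ / ca lam Astar) * th lam Astar ^ l.length := by
  have hca := ca_gt hl hA
  have hc0 : 0 < ca lam Astar := by linarith
  have hcont : Continuous v := by
    apply LipschitzWith.continuous (K := ⟨ℓ, h0⟩)
    apply LipschitzWith.of_dist_le_mul
    intro x y
    exact hv x y
  have hPI : PI v := PI.of_cont hp hcont
  set m := ∫ y in (0:ℝ)..1, v y with hm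
  have hlow : ∀ x, m - v x ≤ ℓ := by
    intro x
    have : ∫ y in x..(x+1), v y ≤ ∫ y in x..(x+1), (v x + ℓ) := by
      apply intervalIntegral.integral_mono_on (by linarith) (hPI.int _ _) (by simp)
      intro y hy
      have h1 := (abs_le.1 (hv y x)).2
      have : |y - x| ≤ 1 := by rw [abs_le]; constructor <;> linarith [hy.1, hy.2]
      nlinarith
    rw [← hPI.shift x] at this
    simp at this
    linarith
  set M := ℓ + ℓ / ca lam Astar with hM
  have hM0 : 0 ≤ M := by positivity
  have hu : Kc (ca lam Astar) (fun x => v x - m + M) := by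
    refine ⟨fun x => by simp only [hp x], fun x => ?_, fun x y => ?_⟩
    · have := hlow x
      have : 0 ≤ ℓ / ca lam Astar := by positivity
      linarith
    · have h1 := hlow y
      have h2 := (abs_le.1 (hv x y)).2
      have h3 := Real.add_one_le_exp (ca lam Astar * |x - y|)
      have h4 : ℓ / ca lam Astar ≤ v y - m + M := by linarith
      have h6 : 0 ≤ ℓ / ca lam Astar := by positivity
      have h5 : ca lam Astar * |x - y| * (ℓ / ca lam Astar) = ℓ * |x-y| := by field_simp
      have h7 : 0 ≤ ca lam Astar * |x - y| := by positivity
      have h8 : (ca lam Astar * |x - y|) * (ℓ / ca lam Astar) ≤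
        (ca lam Astar * |x - y|) * (v y - m + M) := by gcongr
      have h9 : (ca lam Astar * |x - y| + 1) * (v y - m + M) ≤
        Real.exp (ca lam Astar * |x - y|) * (v y - m + M) :=
        mul_le_mul_of_nonneg_right h3 (by linarith)
      nlinarith
  have hk : Kc (ca lam Astar) (fun _ => M) := by
    refine ⟨fun x => rfl, fun x => hM0, fun x y => ?_⟩
    have : 1 ≤ Real.exp (ca lam Astar * |x - y|) := Real.one_le_exp (by positivity)
    nlinarith
  have := memory_loss hl hA hφ l (c := M) hu hk (by
    rw [intervalIntegral.integral_add ((hPI.sub (PI.const m)).int _ _) (by simp),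
      intervalIntegral.integral_sub (hPI.int _ _) (by simp)]
    simp [← hm]) (by simp)
  simpa using this

theorem approx_decay (hl : 1 < lam) (hA : 0 < Astar) {φ : ℝ → ℝ} (hφ : Tst φ)
    (l : List (CM lam Astar)) {u v : ℝ → ℝ} {ℓ e : ℝ} (h0 : 0 ≤ ℓ)
    (hp : Function.Periodic v 1) (hv : ∀ x y, |v x - v y| ≤ ℓ * |x - y|)
    (hu : PI u) (hu1 : ∫ x in (0:ℝ)..1, u x = 1)
    (he : ∫ x in (0:ℝ)..1, |u x - v x| ≤ e) :
    |∫ x in (0:ℝ)..1, (u x - 1) * pull l φ x| ≤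
      2 * e + 2 * (ℓ + ℓ / ca lam Astar) * th lam Astar ^ l.length := by
  have h1 := lip_decay hl hA hφ l h0 hp hv
  have hcont : Continuous v := by
    apply LipschitzWith.continuous (K := ⟨ℓ, h0⟩)
    apply LipschitzWith.of_dist_le_mul
    intro x y
    exact hv x y
  have hPI : PI v := PI.of_cont hp hcont
  have hpl := pull_Tst l hφ
  set m := ∫ y in (0:ℝ)..1, v y with hm
  have h2 := (abs_int_le (hu.sub hPI) hpl).trans he
  have h3 : |1 - m| ≤ e := by
    have := (abs_int_le (hu.sub hPI) Tst_one).trans he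
    simp only [mul_one] at this
    rwa [intervalIntegral.integral_sub (hu.int _ _) (hPI.int _ _), hu1] at this
  have h4 : |∫ x in (0:ℝ)..1, (m - 1) * pull l φ x| ≤ e := by
    refine (abs_int_le (PI.const (m-1)) hpl).trans ?_
    simp only [intervalIntegral.integral_const, sub_zero, one_smul]
    rwa [abs_sub_comm]
  have e1 : ∫ x in (0:ℝ)..1, (u x - 1) * pull l φ x =
      (∫ x in (0:ℝ)..1, (u x - v x) * pull l φ x) + (∫ x in (0:ℝ)..1, (v x - m) * pull l φ x)
      + ∫ x in (0:ℝ)..1, (m - 1) * pull l φ x := by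
    have i1 := II_mul ((hu.sub hPI).int 0 1) hpl
    have i2 := II_mul ((hPI.sub (PI.const m)).int 0 1) hpl
    have i3 := II_mul ((PI.const (m-1)).int 0 1) hpl
    rw [← intervalIntegral.integral_add i1 i2, ← intervalIntegral.integral_add (i1.add i2) i3]
    congr 1; funext x; ring
  rw [e1]
  have := abs_add_three (∫ x in (0:ℝ)..1, (u x - v x) * pull l φ x)
    (∫ x in (0:ℝ)..1, (v x - m) * pull l φ x) (∫ x in (0:ℝ)..1, (m - 1) * pull l φ x)
  linarith

end QDSproof

open MeasureTheory Filter Topology Set UniformConvergence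

namespace QDSproof

variable {lam Astar : ℝ}

/-- C¹ closeness, pointwise -/
def Close (δ : ℝ) (S T : CM lam Astar) : Prop :=
  (∀ x : ℝ, dist ((S.F x : ℝ) : Circle1) ((T.F x : ℝ) : Circle1) ≤ δ) ∧
    ∀ x : ℝ, |deriv S.F x - deriv T.F x| ≤ δ

theorem Close.nonneg {δ : ℝ} {S T : CM lam Astar} (h : Close δ S T) : 0 ≤ δ :=
  dist_nonneg.trans (h.1 0)

theorem D_lip {δ : ℝ} {S T : CM lam Astar} (h : Close δ S T) (x y : ℝ) :
    |(S.F x - T.F x) - (S.F y - T.F y)| ≤ δ * |x - y| := by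
  have := Convex.norm_image_sub_le_of_norm_deriv_le (f := fun z => S.F z - T.F z) (s := univ)
    (C := δ) (x := y) (y := x) (fun z _ => (F_diff S z).sub (F_diff T z)) (fun z _ => by
      rw [deriv_fun_sub (F_diff S z) (F_diff T z)]
      exact h.2 z) convex_univ (mem_univ _) (mem_univ _)
  simpa using this

theorem deg_eq {δ : ℝ} (hδ : δ < 1) {S T : CM lam Astar} (h : Close δ S T) : S.deg = T.deg := by
  have h1 := D_lip h (0+1) 0
  rw [S.lift_add_one, T.lift_add_one] at h1
  have e : S.F 0 + S.deg - (T.F 0 + T.deg) - (S.F 0 - T.F 0) = ((S.deg - T.deg : ℤ) : ℝ) := by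
    push_cast; ring
  rw [e] at h1
  have h2 : |((S.deg - T.deg : ℤ) : ℝ)| < 1 := by
    simp only [zero_add, sub_zero, abs_one, mul_one] at h1; linarith
  have h3 : |S.deg - T.deg| < 1 := by exact_mod_cast h2
  have := Int.abs_lt_one_iff.1 h3
  omega

theorem shift_exists {δ : ℝ} (hδ : δ < 1) {S T : CM lam Astar} (h : Close δ S T) :
    ∃ p : ℤ, ∀ x, |S.F x - T.F x - p| ≤ 2 * δ := by
  have h0 := h.1 0
  rw [dist_eq_norm, ← AddCircle.coe_sub, UnitAddCircle.norm_eq] at h0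
  refine ⟨round (S.F 0 - T.F 0), fun x => ?_⟩
  have hper : Function.Periodic (fun x => S.F x - T.F x) 1 := by
    intro y
    simp only [S.lift_add_one, T.lift_add_one, deg_eq hδ h]; ring
  obtain ⟨y, hy, hxy⟩ := hper.exists_mem_Ico₀ (by norm_num) x
  rw [hxy]
  have h1 := D_lip h y 0
  have h2 : δ * |y - 0| ≤ δ := by
    apply mul_le_of_le_one_right h.nonneg
    rw [sub_zero, abs_of_nonneg hy.1]; exact hy.2.le
  have := abs_add_le (S.F y - T.F y - (S.F 0 - T.F 0))
    (S.F 0 - T.F 0 - (round (S.F 0 - T.F 0) : ℤ))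
  rw [sub_add_sub_cancel] at this
  linarith

/-- distortion constant -/
noncomputable def kap (lam Astar : ℝ) : ℝ := 2 * ca lam Astar + 2 * Astar + 1

theorem ratio (hl : 1 < lam) (hA : 0 < Astar) {δ : ℝ} (hδ : 0 ≤ δ) {S T : CM lam Astar}
    (h : ∀ x : ℝ, |deriv S.F x - deriv T.F x| ≤ δ) {u : ℝ → ℝ} (hu : Kc (ca lam Astar) u)
    {q r : ℝ} (hqr : |q - r| ≤ 2 * δ) :
    u q / deriv S.F q ≤ Real.exp (kap lam Astar * δ) * (u r / deriv T.F r) := by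
  have hca := ca_gt hl hA
  have h1 := F'_pos hl S q
  have h2 := F'_pos hl T r
  have hu1 : u q ≤ Real.exp (2 * ca lam Astar * δ) * u r := by
    refine (hu.ineq q r).trans ?_
    apply mul_le_mul_of_nonneg_right _ (hu.nonneg r)
    apply Real.exp_le_exp.2
    nlinarith
  have hd : deriv T.F r ≤ Real.exp ((2 * Astar + 1) * δ) * deriv S.F q := by
    have h3 := (abs_le.1 (h r)).1
    have h4 := (abs_le.1 (F'_lip S q r)).1
    have h5 : Astar * |q - r| ≤ Astar * (2 * δ) := by gcongr
    have h6 := Real.add_one_le_exp ((2 * Astar + 1) * δ)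
    have h7 : 0 ≤ (2 * Astar + 1) * δ := by positivity
    calc deriv T.F r ≤ deriv S.F q + (2 * Astar + 1) * δ := by linarith
      _ ≤ ((2 * Astar + 1) * δ + 1) * deriv S.F q := by nlinarith
      _ ≤ _ := by gcongr
  rw [div_le_iff₀ (by linarith)]
  calc u q ≤ Real.exp (2 * ca lam Astar * δ) * u r := hu1
    _ = Real.exp (2 * ca lam Astar * δ) * (u r / deriv T.F r) * deriv T.F r := by field_simp
    _ ≤ Real.exp (2 * ca lam Astar * δ) * (u r / deriv T.F r) *
        (Real.exp ((2 * Astar + 1) * δ) * deriv S.F q) := by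
        have := hu.nonneg r
        gcongr
    _ = _ := by
      have : kap lam Astar * δ = 2 * ca lam Astar * δ + (2 * Astar + 1) * δ := by
        unfold kap; ring
      rw [this, Real.exp_add]; ring

theorem Lop_close (hl : 1 < lam) (hA : 0 < Astar) {δ : ℝ} (hδ : δ < 1) {S T : CM lam Astar}
    (h : Close δ S T) {u : ℝ → ℝ} (hu : Kc (ca lam Astar) u) (x : ℝ) :
    Lop S u x ≤ Real.exp (kap lam Astar * δ) * Lop T u x ∧
    Lop T u x ≤ Real.exp (kap lam Astar * δ) * Lop S u x := by
  obtain ⟨p, hp⟩ := shift_exists hδ h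
  have hper : Lop T u x = Lop T u (x + ((-p : ℤ) : ℝ)) := (per_int (Lop_per hl T hu.per) _ _).symm
  have hq : ∀ y, |Gi S y - Gi T (y + ((-p : ℤ) : ℝ))| ≤ 2 * δ := by
    intro y
    have h1 := F_abs S (Gi S y) (Gi T (y + ((-p : ℤ) : ℝ)))
    rw [F_Gi hl] at h1
    have h2 := hp (Gi T (y + ((-p : ℤ) : ℝ)))
    rw [F_Gi hl] at h2
    push_cast at h1 h2 ⊢
    rw [abs_sub_comm] at h2
    have e : y + -(p:ℝ) - (S.F (Gi T (y + -(p:ℝ)))- (p:ℝ)) = y - S.F (Gi T (y + -(p:ℝ))) := by ring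
    have e2 : (p:ℝ) - (S.F (Gi T (y + -(p:ℝ))) - (y + -(p:ℝ))) = y - S.F (Gi T (y + -(p:ℝ))) := by
      ring
    rw [e2] at h2
    nlinarith [abs_nonneg (Gi S y - Gi T (y + -(p:ℝ)))]
  rw [hper]
  unfold Lop
  rw [deg_eq hδ h, Finset.mul_sum, Finset.mul_sum]
  constructor
  · refine Finset.sum_le_sum fun j _ => ?_
    have := hq (x + j)
    rw [add_right_comm] at this
    exact ratio hl hA h.nonneg h.2 hu this
  · refine Finset.sum_le_sum fun j _ => ?_
    have := hq (x + j)
    rw [add_right_comm, abs_sub_comm] at this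
    exact ratio hl hA h.nonneg (fun x => by rw [abs_sub_comm]; exact h.2 x) hu this

/-- perturbation constant -/
noncomputable def CP (lam Astar : ℝ) : ℝ := 2 + Real.exp (kap lam Astar) * Real.exp (ca lam Astar)

theorem CP_pos : 0 < CP lam Astar := by unfold CP; positivity

theorem pert1 (hl : 1 < lam) (hA : 0 < Astar) {δ : ℝ} {S T : CM lam Astar}
    (h : Close δ S T) {u φ : ℝ → ℝ} (hu : Kc (ca lam Astar) u) (hu1 : ∫ x in (0:ℝ)..1, u x = 1)
    (hφ : Tst φ) :
    |(∫ x in (0:ℝ)..1, u x * φ (S.F x)) - ∫ x in (0:ℝ)..1, u x * φ (T.F x)| ≤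
      CP lam Astar * δ := by
  have h0 := h.nonneg
  have hE := Real.exp_pos (kap lam Astar)
  have hE' := Real.exp_pos (ca lam Astar)
  have hca := ca_gt hl hA
  rcases lt_or_ge δ 1 with hδ | hδ
  · rw [← dual hl S hu.PI hφ, ← dual hl T hu.PI hφ,
      ← int_sub_mul (Lop_PI hl S hu.PI) (Lop_PI hl T hu.PI) hφ]
    refine (abs_int_le ((Lop_PI hl S hu.PI).sub (Lop_PI hl T hu.PI)) hφ).trans ?_
    have hb : ∀ R : CM lam Astar, ∀ x, Lop R u x ≤ Real.exp (ca lam Astar) := by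
      intro R x
      have := (Lop_Kc'' hl hA R hu).le_int (by linarith) x
      rwa [Lop_int hl R hu.PI, hu1, mul_one] at this
    have hx : Real.exp (kap lam Astar * δ) - 1 ≤ Real.exp (kap lam Astar) * δ := by
      have := convexOn_exp.2 (mem_univ (kap lam Astar)) (mem_univ (0:ℝ)) h0
        (by linarith : 0 ≤ 1 - δ) (by ring)
      simp only [smul_eq_mul, mul_zero, add_zero, Real.exp_zero, mul_one] at this
      rw [mul_comm δ] at this
      linarith
    have hk : 0 < kap lam Astar := by unfold kap; linarith
    have hge : 1 ≤ Real.exp (kap lam Astar * δ) := Real.one_le_exp (by positivity)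
    have hpt : ∀ x, |Lop S u x - Lop T u x| ≤
        Real.exp (kap lam Astar) * δ * Real.exp (ca lam Astar) := by
      intro x
      obtain ⟨h1, h2⟩ := Lop_close hl hA hδ h hu x
      have hS := hb S x
      have hT := hb T x
      have hS0 := (Lop_Kc'' hl hA S hu).nonneg x
      have hT0 := (Lop_Kc'' hl hA T hu).nonneg x
      have k1 : (Real.exp (kap lam Astar * δ) - 1) * Lop T u x ≤
        Real.exp (kap lam Astar) * δ * Real.exp (ca lam Astar) := by gcongr
      have k2 : (Real.exp (kap lam Astar * δ) - 1) * Lop S u x ≤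
        Real.exp (kap lam Astar) * δ * Real.exp (ca lam Astar) := by gcongr
      rw [abs_le]; constructor <;> nlinarith
    have : ∫ x in (0:ℝ)..1, |Lop S u x - Lop T u x| ≤
        ∫ x in (0:ℝ)..1, Real.exp (kap lam Astar) * δ * Real.exp (ca lam Astar) := by
      apply intervalIntegral.integral_mono_on (by norm_num)
        ((Lop_PI hl S hu.PI).sub (Lop_PI hl T hu.PI) |>.int _ _).abs (by simp)
      exact fun x _ => hpt x
    simp only [intervalIntegral.integral_const, sub_zero, one_smul] at this
    unfold CP; nlinarith
  · have h1 : ∀ R : CM lam Astar, |∫ x in (0:ℝ)..1, u x * φ (R.F x)| ≤ 1 := by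
      intro R
      have := abs_int_le hu.PI (hφ.comp R)
      simp only [abs_of_nonneg (hu.nonneg _), hu1] at this
      exact this
    have h2 := abs_sub (∫ x in (0:ℝ)..1, u x * φ (S.F x)) (∫ x in (0:ℝ)..1, u x * φ (T.F x))
    have := h1 S
    have := h1 T
    have : 0 ≤ Real.exp (kap lam Astar) * Real.exp (ca lam Astar) := by positivity
    unfold CP; nlinarith

theorem pert_list (hl : 1 < lam) (hA : 0 < Astar) {δ : ℝ} {T : CM lam Astar} {φ : ℝ → ℝ}
    (hφ : Tst φ) (l : List (CM lam Astar)) (hc : ∀ S ∈ l, Close δ S T) :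
    ∀ {u : ℝ → ℝ}, Kc (ca lam Astar) u → ∫ x in (0:ℝ)..1, u x = 1 →
    |(∫ x in (0:ℝ)..1, u x * pull l φ x) -
      ∫ x in (0:ℝ)..1, u x * pull (List.replicate l.length T) φ x| ≤
      l.length * (CP lam Astar * δ) := by
  induction l with
  | nil => intro u hu hu1; simp
  | cons S l ih =>
    intro u hu hu1
    have ih' := ih (fun S hS => hc S (List.mem_cons_of_mem _ hS)) (Lop_Kc'' hl hA S hu)
      (by rw [Lop_int hl S hu.PI, hu1])
    have hp := pull_Tst (List.replicate l.length T) hφ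
    rw [dual hl S hu.PI (pull_Tst l hφ), dual hl S hu.PI hp] at ih'
    have h2 := pert1 hl hA (hc S (by simp)) hu hu1 hp
    have h3 := abs_add_le ((∫ x in (0:ℝ)..1, u x * pull l φ (S.F x)) -
      ∫ x in (0:ℝ)..1, u x * pull (List.replicate l.length T) φ (S.F x))
      ((∫ x in (0:ℝ)..1, u x * pull (List.replicate l.length T) φ (S.F x)) -
      ∫ x in (0:ℝ)..1, u x * pull (List.replicate l.length T) φ (T.F x))
    rw [sub_add_sub_cancel] at h3
    simp only [List.length_cons, List.replicate_succ, pull]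
    push_cast
    linarith

theorem Kc_one (hl : 1 < lam) (hA : 0 < Astar) : Kc (ca lam Astar) (fun _ => 1) := by
  have := ca_gt hl hA
  refine ⟨fun _ => rfl, fun _ => by norm_num, fun x y => ?_⟩
  rw [mul_one]
  apply Real.one_le_exp
  have := abs_nonneg (x - y)
  nlinarith

/-- abstract invariance of a density -/
def Inv (T : CM lam Astar) (r : ℝ → ℝ) : Prop :=
  ∀ φ : ℝ → ℝ, Tst φ → ∫ x in (0:ℝ)..1, r x * φ (T.F x) = ∫ x in (0:ℝ)..1, r x * φ x

theorem Inv_pull {T : CM lam Astar} {r : ℝ → ℝ} (h : Inv T r) {φ : ℝ → ℝ} (hφ : Tst φ) (m : ℕ) :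
    ∫ x in (0:ℝ)..1, r x * pull (List.replicate m T) φ x = ∫ x in (0:ℝ)..1, r x * φ x := by
  induction m with
  | zero => rfl
  | succ k ih =>
    rw [← ih, ← h (pull (List.replicate k T) φ) (pull_Tst _ hφ)]
    rfl

/-- Lipschitz approximability -/
def Apx (r : ℝ → ℝ) : Prop := ∀ e : ℝ, 0 < e → ∃ (v : ℝ → ℝ) (ℓ : ℝ), 0 ≤ ℓ ∧
  Function.Periodic v 1 ∧ (∀ x y, |v x - v y| ≤ ℓ * |x - y|) ∧ ∫ x in (0:ℝ)..1, |r x - v x| ≤ e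

theorem srb_conv (hl : 1 < lam) (hA : 0 < Astar) {T : CM lam Astar} {φ : ℝ → ℝ}
    (hφ : Tst φ) {r : ℝ → ℝ} (hr : PI r) (hr1 : ∫ x in (0:ℝ)..1, r x = 1) (hI : Inv T r)
    (hapx : Apx r) {u : ℝ → ℝ} (hu : Kc (ca lam Astar) u) (hu1 : ∫ x in (0:ℝ)..1, u x = 1)
    (m : ℕ) :
    |(∫ x in (0:ℝ)..1, u x * pull (List.replicate m T) φ x) - ∫ x in (0:ℝ)..1, r x * φ x| ≤
      2 * th lam Astar ^ m := by
  apply le_of_forall_pos_le_add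
  intro ε hε
  obtain ⟨v, ℓ, h0, hvp, hvl, hv⟩ := hapx (ε / 4) (by positivity)
  obtain ⟨t0, t1⟩ := th_mem hl hA
  have hca := ca_gt hl hA
  obtain ⟨N, hN⟩ : ∃ N : ℕ, 2 * (ℓ + ℓ / ca lam Astar) * th lam Astar ^ N < ε / 2 := by
    have := (tendsto_pow_atTop_nhds_zero_of_lt_one t0.le t1).const_mul
      (2 * (ℓ + ℓ / ca lam Astar))
    rw [mul_zero] at this
    exact (this.eventually (gt_mem_nhds (by positivity : 0 < ε / 2))).exists
  have hψ := pull_Tst (List.replicate m T) hφ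
  have h1 := approx_decay hl hA hψ (List.replicate N T) h0 hvp hvl hr hr1 hv
  rw [List.length_replicate] at h1
  rw [int_sub_mul hr (PI.const 1) (pull_Tst _ hψ), Inv_pull hI hψ, Inv_pull hI hφ,
    ← dual_list hl _ hψ (PI.const 1)] at h1
  have hK := Lit_Kc hl hA (List.replicate N T) (Kc_one hl hA)
  have h2 := memory_loss hl hA hφ (List.replicate m T) (c := 1) hu hK hu1
    (by rw [Lit_int hl _ (PI.const 1)]; simp)
  rw [int_sub_mul hu.PI hK.PI hψ, List.length_replicate] at h2
  rw [abs_le] at *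
  constructor <;> linarith [h1.1, h1.2, h2.1, h2.2]

end QDSproof

open MeasureTheory Filter Topology Set UniformConvergence

namespace QDSproof

variable {lam Astar : ℝ}

theorem coe_eq_iff (x y : ℝ) : ((x : ℝ) : Circle1) = (y : Circle1) ↔ ∃ n : ℤ, x = y + n := by
  rw [← sub_eq_zero, ← AddCircle.coe_sub, AddCircle.coe_eq_zero_iff]
  constructor
  · rintro ⟨n, hn⟩
    refine ⟨n, ?_⟩
    simp at hn; linarith
  · rintro ⟨n, hn⟩
    refine ⟨n, ?_⟩
    simp [hn]

theorem coe_add_int (x : ℝ) (n : ℤ) : ((x + n : ℝ) : Circle1) = (x : Circle1) :=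
  (coe_eq_iff _ _).2 ⟨n, rfl⟩

theorem eqIco (x : ℝ) : ((AddCircle.equivIco (1:ℝ) 0 (x : Circle1) : ℝ)) = Int.fract x := by
  rw [AddCircle.coe_equivIco_mk_apply]; simp

theorem per_fract {φ : ℝ → ℝ} (h : Function.Periodic φ 1) (x : ℝ) : φ (Int.fract x) = φ x := by
  conv_rhs => rw [← Int.fract_add_floor x]
  rw [per_int h]

theorem toMap_coe (T : CM lam Astar) (x : ℝ) : T.toMap (x : Circle1) = ((T.F x : ℝ) : Circle1) := by
  unfold CM.toMap
  rw [eqIco, coe_eq_iff]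
  refine ⟨-(⌊x⌋ * T.deg), ?_⟩
  have := F_add_int T (Int.fract x) ⌊x⌋
  rw [Int.fract_add_floor] at this
  push_cast; linarith

theorem dmap_coe (T : CM lam Astar) (x : ℝ) : T.dmap (x : Circle1) = deriv T.F x := by
  unfold CM.dmap
  rw [eqIco, per_fract (F'_per T)]

theorem transfer_coe (hl : 1 < lam) (T : CM lam Astar) (h : Circle1 → ℝ) (x : ℝ) :
    transfer T h (x : Circle1) = Lop T (fun y : ℝ => h (y : Circle1)) x := by
  have hd := deg_gt hl T
  have hdn := deg_cast hl T
  have hdZ : (1:ℤ) < T.deg := by exact_mod_cast hd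
  have hdnZ : ((T.deg.toNat : ℕ) : ℤ) = T.deg := by omega
  let e : Fin T.deg.toNat → {y : Circle1 // T.toMap y = (x : Circle1)} := fun j =>
    ⟨((Gi T (x + (j : ℕ)) : ℝ) : Circle1), by
      rw [toMap_coe, F_Gi hl]
      exact_mod_cast coe_add_int x ((j : ℕ) : ℤ)⟩
  have he : Function.Bijective e := by
    constructor
    · intro i j hij
      have h1 : ((Gi T (x + (i : ℕ)) : ℝ) : Circle1) = ((Gi T (x + (j : ℕ)) : ℝ) : Circle1) :=
        congrArg Subtype.val hij
      obtain ⟨n, hn⟩ := (coe_eq_iff _ _).1 h1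
      have h2 := congrArg T.F hn
      rw [F_add_int, F_Gi hl, F_Gi hl] at h2
      have h3 : ((i:ℕ):ℤ) = ((j:ℕ):ℤ) + n * T.deg := by
        have : (((i:ℕ):ℤ):ℝ) = ((((j:ℕ):ℤ) + n * T.deg : ℤ) : ℝ) := by push_cast; linarith
        exact_mod_cast this
      have hi : ((i:ℕ):ℤ) < T.deg := by have := i.2; omega
      have hj : ((j:ℕ):ℤ) < T.deg := by have := j.2; omega
      have hn0 : n = 0 := by
        by_contra hne
        rcases lt_or_gt_of_ne hne with hh | hh <;> nlinarith [Int.natCast_nonneg (i:ℕ), Int.natCast_nonneg (j:ℕ)]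
      apply Fin.ext
      rw [hn0] at h3; omega
    · rintro ⟨y, hy⟩
      obtain ⟨y0, rfl⟩ := QuotientAddGroup.mk_surjective y
      have hy' : T.toMap ((y0 : ℝ) : Circle1) = (x : Circle1) := hy
      rw [toMap_coe] at hy'
      obtain ⟨n, hn⟩ := (coe_eq_iff _ _).1 hy'
      have hr0 := Int.emod_nonneg n (by omega : T.deg ≠ 0)
      have hr1 := Int.emod_lt_of_pos n (by omega : 0 < T.deg)
      refine ⟨⟨(n % T.deg).toNat, by omega⟩, ?_⟩
      apply Subtype.ext
      change ((Gi T (x + ((n % T.deg).toNat : ℕ)) : ℝ) : Circle1) = ((y0 : ℝ) : Circle1)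
      rw [coe_eq_iff]
      refine ⟨-(n / T.deg), ?_⟩
      apply (F_mono hl T).injective
      rw [F_Gi hl, F_add_int, hn]
      have h1 : (((n % T.deg).toNat : ℕ) : ℝ) = ((n % T.deg : ℤ) : ℝ) := by
        have : (((n % T.deg).toNat : ℕ) : ℤ) = n % T.deg := Int.toNat_of_nonneg hr0
        exact_mod_cast this
      have h2 : (n : ℝ) = T.deg * ((n / T.deg : ℤ) : ℝ) + ((n % T.deg : ℤ) : ℝ) := by
        exact_mod_cast (Int.mul_ediv_add_emod n T.deg).symm
      rw [h1]; push_cast; linarith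
  unfold transfer Lop
  rw [← (Equiv.ofBijective e he).tsum_eq, tsum_fintype, Finset.sum_range]
  refine Finset.sum_congr rfl fun j _ => ?_
  simp only [Equiv.ofBijective_apply, e, dmap_coe, wt]

theorem coe_per (f : Circle1 → ℝ) : Function.Periodic (fun x : ℝ => f (x : Circle1)) 1 := by
  intro x
  have := coe_add_int x 1
  push_cast at this
  simp only [this]

theorem PI_coe {f : Circle1 → ℝ} (hf : Integrable f volume) : PI (fun x : ℝ => f (x : Circle1)) := by
  refine ⟨coe_per f, fun a b => ?_⟩
  apply (coe_per f).intervalIntegrable (t := 0) (by norm_num)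
  rw [intervalIntegrable_iff_integrableOn_Ioc_of_le (by norm_num)]
  exact (AddCircle.measurePreserving_mk 1 0).integrable_comp_of_integrable hf

theorem int_coe (f : Circle1 → ℝ) : ∫ x in (0:ℝ)..1, f (x : Circle1) = ∫ y : Circle1, f y := by
  have := AddCircle.intervalIntegral_preimage 1 0 f
  rwa [zero_add] at this

theorem toMap_meas (T : CM lam Astar) : Measurable T.toMap := by
  unfold CM.toMap
  have h1 : Measurable (fun x : Circle1 => ((AddCircle.equivIco (1:ℝ) 0 x : ℝ))) :=
    measurable_subtype_coe.comp (AddCircle.measurableEquivIco (1:ℝ) 0).measurable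
  exact AddCircle.measurable_mk'.comp ((F_diff T).continuous.measurable.comp h1)

theorem srb_inv (T : CM lam Astar) {ρ : Circle1 → ℝ} (h : IsSRBDensity T ρ) :
    Inv T (fun x : ℝ => ρ (x : Circle1)) := by
  intro φ hφ
  obtain ⟨⟨hi, h1, hpos⟩, -, hmap⟩ := h
  let φc : Circle1 → ℝ := fun y => φ ((AddCircle.equivIco (1:ℝ) 0 y : ℝ))
  have hφm : Measurable φc := by
    have h1 : Measurable (fun x : Circle1 => ((AddCircle.equivIco (1:ℝ) 0 x : ℝ))) :=
      measurable_subtype_coe.comp (AddCircle.measurableEquivIco (1:ℝ) 0).measurable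
    exact hφ.meas.comp h1
  have hφc : ∀ x : ℝ, φc (x : Circle1) = φ x := fun x => by
    simp only [φc]; rw [eqIco, per_fract hφ.per]
  have hw : ∀ g : Circle1 → ℝ,
      ∫ y, g y ∂(volume.withDensity (fun x => ENNReal.ofReal (ρ x))) = ∫ y : Circle1, ρ y * g y := by
    intro g
    rw [integral_withDensity_eq_integral_toReal_smul₀
      (hi.aestronglyMeasurable.aemeasurable.ennreal_ofReal) (by simp)]
    refine integral_congr_ae (Eventually.of_forall fun y => ?_)
    simp [ENNReal.toReal_ofReal (hpos y)]
  have key : ∫ y : Circle1, ρ y * φc (T.toMap y) = ∫ y : Circle1, ρ y * φc y := by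
    rw [← hw φc, ← hw (fun y => φc (T.toMap y))]
    conv_rhs => rw [← hmap]
    rw [integral_map (toMap_meas T).aemeasurable hφm.aestronglyMeasurable]
  rw [← int_coe, ← int_coe] at key
  simpa only [toMap_coe, hφc] using key

theorem sign_exists {D : ℝ → ℝ} (hD : PI D) : ∃ φ, Tst φ ∧
    ∫ x in (0:ℝ)..1, |D x| = ∫ x in (0:ℝ)..1, D x * φ x := by
  have hm : AEStronglyMeasurable D (volume.restrict (Ioc (0:ℝ) 1)) :=
    (hD.int 0 1).1.aestronglyMeasurable
  let D' := hm.mk D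
  have hD' : Measurable D' := hm.stronglyMeasurable_mk.measurable
  refine ⟨fun x => if 0 ≤ D' (Int.fract x) then 1 else -1, ⟨?_, ?_, ?_⟩, ?_⟩
  · exact Measurable.ite (measurableSet_le measurable_const (hD'.comp measurable_fract))
      measurable_const measurable_const
  · intro x; simp
  · intro x; split_ifs <;> simp
  · apply intervalIntegral.integral_congr_ae
    have h1 : ∀ᵐ x : ℝ, x ≠ 1 := by simp [ae_iff]
    have h2 := (ae_restrict_iff' measurableSet_Ioc).1 hm.ae_eq_mk
    filter_upwards [h1, h2] with x hx1 hx2 hx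
    rw [uIoc_of_le (by norm_num)] at hx
    have hf : Int.fract x = x := Int.fract_eq_self.2 ⟨hx.1.le, lt_of_le_of_ne hx.2 hx1⟩
    have hx3 : D x = D' x := hx2 hx
    simp only [hf, ← hx3]
    split_ifs with hs
    · rw [abs_of_nonneg hs, mul_one]
    · rw [abs_of_neg (not_le.1 hs)]; ring

/-- moving average -/
noncomputable def MA (ε : ℝ) (u : ℝ → ℝ) (x : ℝ) : ℝ := ε⁻¹ * ∫ y in x..(x+ε), u y

theorem MA_per (ε : ℝ) {u : ℝ → ℝ} (hu : PI u) : Function.Periodic (MA ε u) 1 := by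
  intro x
  unfold MA
  have := intervalIntegral.integral_comp_add_right (a := x) (b := x + ε) u 1
  simp only [hu.per _] at this
  rw [this]; congr 2; ring

theorem MA_lip {ε B : ℝ} (hε : 0 < ε) {u : ℝ → ℝ} (hu : PI u) (hB : ∀ᵐ y : ℝ, |u y| ≤ B)
    (x y : ℝ) : |MA ε u x - MA ε u y| ≤ 2 * B / ε * |x - y| := by
  unfold MA
  rw [← mul_sub, intervalIntegral.integral_interval_sub_interval_comm (hu.int _ _) (hu.int _ _)
    (hu.int _ _), abs_mul, abs_of_pos (inv_pos.2 hε)]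
  have hB' : ∀ a b : ℝ, |∫ y in a..b, u y| ≤ B * |b - a| := by
    intro a b
    have := intervalIntegral.norm_integral_le_of_norm_le_const_ae (f := u) (a := a) (b := b)
      (C := B) (hB.mono fun y hy _ => hy)
    exact this
  have h1 := hB' x y
  have h2 := hB' (x+ε) (y+ε)
  rw [add_sub_add_right_eq_sub, abs_sub_comm] at h2
  rw [abs_sub_comm] at h1
  have h3 := abs_sub (∫ t in x..y, u t) (∫ t in (x+ε)..(y+ε), u t)
  have : ε⁻¹ * |(∫ t in x..y, u t) - ∫ t in (x+ε)..(y+ε), u t| ≤ ε⁻¹ * (B * |x-y| + B * |x-y|) := by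
    gcongr; linarith
  refine this.trans (le_of_eq ?_)
  field_simp; ring

theorem MA_near {ε c : ℝ} (hε : 0 < ε) {u : ℝ → ℝ} (hu : PI u) {x : ℝ}
    (h : ∀ᵐ y : ℝ, y ∈ Ioc x (x+ε) → |u x - u y| ≤ c) : |u x - MA ε u x| ≤ c := by
  have e : u x - MA ε u x = ε⁻¹ * ∫ y in x..(x+ε), (u x - u y) := by
    rw [intervalIntegral.integral_sub (by simp) (hu.int _ _), intervalIntegral.integral_const]
    unfold MA
    simp only [add_sub_cancel_left, smul_eq_mul]
    field_simp
  rw [e, abs_mul, abs_of_pos (inv_pos.2 hε), inv_mul_le_iff₀ hε]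
  have := intervalIntegral.norm_integral_le_of_norm_le_const_ae (f := fun y => u x - u y)
    (a := x) (b := x + ε) (C := c) (by rwa [uIoc_of_le (by linarith)])
  rw [add_sub_cancel_left, abs_of_pos hε] at this
  rw [mul_comm]; exact this

theorem apx_coe {f : Circle1 → ℝ} (hf : Integrable f volume) : Apx (fun x : ℝ => f (x : Circle1)) := by
  intro e he
  obtain ⟨g, hg, hgi⟩ := hf.exists_boundedContinuous_integral_sub_le (half_pos he)
  have huc : UniformContinuous g := CompactSpace.uniformContinuous_of_continuous g.continuous
  obtain ⟨δ, hδ, hd⟩ := Metric.uniformContinuous_iff.1 huc (e/2) (half_pos he)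
  have hG := PI_coe hgi
  have hε : 0 < δ / 2 := by positivity
  have hl := MA_lip (B := ‖g‖) hε hG (Eventually.of_forall fun y => g.norm_coe_le_norm _)
  refine ⟨MA (δ/2) (fun x : ℝ => g (x : Circle1)), 2 * ‖g‖ / (δ/2), by positivity,
    MA_per _ hG, hl, ?_⟩
  have hnear : ∀ x : ℝ, |g (x : Circle1) - MA (δ/2) (fun x : ℝ => g (x : Circle1)) x| ≤ e/2 := by
    intro x
    apply MA_near hε hG
    refine Eventually.of_forall fun y hy => ?_
    have : dist ((x : ℝ) : Circle1) (y : Circle1) < δ := by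
      rw [dist_eq_norm, ← AddCircle.coe_sub]
      have h1 : ‖((x - y : ℝ) : Circle1)‖ ≤ |x - y| := by
        rw [UnitAddCircle.norm_eq]
        have := round_le (x-y) 0
        simpa using this
      have h2 : |x - y| ≤ δ/2 := by rw [abs_le]; constructor <;> linarith [hy.1, hy.2]
      linarith
    exact (hd this).le
  have hcont : Continuous (MA (δ/2) (fun x : ℝ => g (x : Circle1))) := by
    apply LipschitzWith.continuous (K := ⟨2 * ‖g‖ / (δ/2), by positivity⟩)
    apply LipschitzWith.of_dist_le_mul
    intro x y
    exact hl x y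
  have hMP := PI.of_cont (MA_per (δ/2) hG) hcont
  have h1 : ∫ x in (0:ℝ)..1, |f (x : Circle1) - MA (δ/2) (fun x : ℝ => g (x : Circle1)) x| ≤
      ∫ x in (0:ℝ)..1, (|f (x : Circle1) - g (x : Circle1)| + e/2) := by
    apply intervalIntegral.integral_mono_on (by norm_num) (((PI_coe hf).sub hMP).int _ _).abs
      ((((PI_coe hf).sub hG).int _ _).abs.add (by simp))
    intro x _
    have := abs_sub_le (f (x : Circle1)) (g (x : Circle1))
      (MA (δ/2) (fun x : ℝ => g (x : Circle1)) x)
    linarith [hnear x]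
  rw [intervalIntegral.integral_add (((PI_coe hf).sub hG).int _ _).abs (by simp),
    int_coe (fun x => |f x - g x|)] at h1
  have h2 : ∫ x : Circle1, |f x - g x| ≤ e/2 := hg
  simp only [intervalIntegral.integral_const, sub_zero, one_smul] at h1
  linarith

end QDSproof

open MeasureTheory Filter Topology Set UniformConvergence
namespace QDSproof
variable {lam Astar : ℝ}

theorem zrep_coe (z : Circle1) : ((zrep z : ℝ) : Circle1) = z := AddCircle.coe_equivIco

theorem ae_ne (z : Circle1) : ∀ᵐ y : ℝ, (y : Circle1) ≠ z := by
  have hc : (Set.range fun n : ℤ => zrep z + n).Countable := Set.countable_range _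
  filter_upwards [hc.ae_notMem volume] with y hy h
  rw [← zrep_coe z, coe_eq_iff] at h
  obtain ⟨n, hn⟩ := h
  exact hy ⟨n, hn.symm⟩

theorem arc_mem (z x : Circle1) : arcCoord z x ∈ Ioc (zrep z) (zrep z + 1) :=
  (AddCircle.equivIoc 1 (zrep z) x).2

theorem arc_le (z x y : Circle1) : arcDist z x y ≤ 1 := by
  have h1 := arc_mem z x
  have h2 := arc_mem z y
  unfold arcDist
  rw [abs_le]; constructor <;> linarith [h1.1, h1.2, h2.1, h2.2]

theorem arc_coe (z : Circle1) {x : ℝ} (hx : x ∈ Ioc (zrep z) (zrep z + 1)) :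
    arcCoord z (x : Circle1) = x := by
  unfold arcCoord
  rw [AddCircle.equivIoc_coe_eq hx]

theorem ne_of_Ioo (z : Circle1) {x : ℝ} (hx : x ∈ Ioo (zrep z) (zrep z + 1)) :
    (x : Circle1) ≠ z := by
  intro h
  rw [← zrep_coe z, coe_eq_iff] at h
  obtain ⟨n, hn⟩ := h
  have h1 : (0:ℝ) < n := by linarith [hx.1]
  have h2 : (n:ℝ) < 1 := by linarith [hx.2]
  norm_cast at h1 h2
  omega

theorem rho_le {L : ℝ} (hL : 0 < L) {ρ : Circle1 → ℝ} {z : Circle1} (hρ : IsProbDensity ρ)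
    (hz : LipOnArc z L ρ) {x : ℝ} (hx : (x : Circle1) ≠ z) : |ρ (x : Circle1)| ≤ 1 + L := by
  rw [abs_of_nonneg (hρ.2.2 _)]
  have hu := PI_coe hρ.1
  have : ∫ y in (0:ℝ)..1, (ρ (x : Circle1) - L) ≤ ∫ y in (0:ℝ)..1, ρ (y : Circle1) := by
    apply intervalIntegral.integral_mono_ae (by norm_num) (by simp) (hu.int _ _)
    filter_upwards [ae_ne z] with y hy
    have h1 := (abs_le.1 (hz _ _ hx hy)).2
    have h2 := mul_le_mul_of_nonneg_left (arc_le z x y) hL.le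
    linarith
  rw [int_coe, hρ.2.1] at this
  simp at this
  linarith

theorem rho_approx {L ε : ℝ} (hL : 0 < L) (hε : 0 < ε) (hε1 : ε ≤ 1) {ρ : Circle1 → ℝ} {z : Circle1}
    (hρ : IsProbDensity ρ) (hz : LipOnArc z L ρ) :
    ∃ v : ℝ → ℝ, Function.Periodic v 1 ∧ (∀ x y, |v x - v y| ≤ 2 * (1 + L) / ε * |x - y|) ∧
      ∫ x in (0:ℝ)..1, |ρ (x : Circle1) - v x| ≤ (3 * L + 2) * ε := by
  have hu := PI_coe hρ.1
  have hB : ∀ᵐ y : ℝ, |ρ (y : Circle1)| ≤ 1 + L := by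
    filter_upwards [ae_ne z] with y hy using rho_le hL hρ hz hy
  set u : ℝ → ℝ := fun x => ρ (x : Circle1) with hud
  have hlip := MA_lip hε hu hB
  refine ⟨MA ε u, MA_per _ hu, hlip, ?_⟩
  have hcont : Continuous (MA ε u) := by
    apply LipschitzWith.continuous (K := ⟨2 * (1 + L) / ε, by positivity⟩)
    exact LipschitzWith.of_dist_le_mul fun x y => hlip x y
  have hMP := PI.of_cont (MA_per ε hu) hcont
  have hD := hu.sub hMP
  have hDa : PI (fun x => |u x - MA ε u x|) :=
    ⟨fun x => by simp only [hu.per x, MA_per ε hu x], fun a b => (hD.int a b).abs⟩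
  rw [hDa.shift (zrep z), ← intervalIntegral.integral_add_adjacent_intervals
    (b := zrep z + 1 - ε) (hDa.int _ _) (hDa.int _ _)]
  have hMA : ∀ x, |MA ε u x| ≤ 1 + L := by
    intro x
    unfold MA
    rw [abs_mul, abs_of_pos (inv_pos.2 hε), inv_mul_le_iff₀ hε]
    have := intervalIntegral.norm_integral_le_of_norm_le_const_ae (f := u) (a := x) (b := x + ε)
      (C := 1 + L) (hB.mono fun y hy _ => hy)
    rw [add_sub_cancel_left, abs_of_pos hε, mul_comm] at this
    exact this
  have h1 : ∫ x in (zrep z)..(zrep z + 1 - ε), |u x - MA ε u x| ≤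
      ∫ x in (zrep z)..(zrep z + 1 - ε), L * ε := by
    apply intervalIntegral.integral_mono_on_of_le_Ioo (by linarith) (hDa.int _ _) (by simp)
    intro x hx
    apply MA_near hε hu
    filter_upwards [ae_ne z] with y hy hyx
    have hxz := ne_of_Ioo z (x := x) ⟨hx.1, by linarith [hx.2]⟩
    refine (hz _ _ hxz hy).trans ?_
    apply mul_le_mul_of_nonneg_left _ hL.le
    unfold arcDist
    rw [arc_coe z (x := x) ⟨hx.1, by linarith [hx.2]⟩,
      arc_coe z (x := y) ⟨by linarith [hx.1, hyx.1], by linarith [hx.2, hyx.2]⟩, abs_le]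
    constructor <;> linarith [hyx.1, hyx.2]
  have h2 : ∫ x in (zrep z + 1 - ε)..(zrep z + 1), |u x - MA ε u x| ≤
      ∫ x in (zrep z + 1 - ε)..(zrep z + 1), 2 * (1 + L) := by
    apply intervalIntegral.integral_mono_ae (by linarith) (hDa.int _ _) (by simp)
    filter_upwards [hB] with y hy
    have := abs_sub (u y) (MA ε u y)
    linarith [hMA y]
  simp only [intervalIntegral.integral_const, smul_eq_mul] at h1 h2
  nlinarith [mul_pos hL hε, mul_pos (mul_pos hL hε) hε]

theorem rho_decay (hl : 1 < lam) (hA : 0 < Astar) {φ : ℝ → ℝ} (hφ : Tst φ)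
    (l : List (CM lam Astar)) {L ε : ℝ} (hL : 0 < L) (hε : 0 < ε) (hε1 : ε ≤ 1) {ρ : Circle1 → ℝ}
    {z : Circle1} (hρ : IsProbDensity ρ) (hz : LipOnArc z L ρ) :
    |∫ x in (0:ℝ)..1, (ρ (x : Circle1) - 1) * pull l φ x| ≤ 2 * ((3 * L + 2) * ε) +
      2 * (2 * (1 + L) / ε + 2 * (1 + L) / ε / ca lam Astar) * th lam Astar ^ l.length := by
  obtain ⟨v, h1, h2, h3⟩ := rho_approx hL hε hε1 hρ hz
  exact approx_decay hl hA hφ l (by positivity) h1 h2 (PI_coe hρ.1)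
    (by rw [int_coe, hρ.2.1]) h3

theorem arr_dual (hl : 1 < lam) (Tarr : ℕ → ℕ → CM lam Astar) (n : ℕ) {ρ : Circle1 → ℝ}
    (hρ : Integrable ρ volume) (k : ℕ) :
    PI (fun x : ℝ => arrTransfer Tarr n k ρ (x : Circle1)) ∧ ∀ φ : ℝ → ℝ, Tst φ →
    ∫ x in (0:ℝ)..1, arrTransfer Tarr n k ρ (x : Circle1) * φ x =
      ∫ x in (0:ℝ)..1, ρ (x : Circle1) *
        pull ((List.range k).map (fun i => Tarr n (i+1))) φ x := by
  induction k with
  | zero => exact ⟨PI_coe hρ, fun φ _ => rfl⟩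
  | succ k ih =>
    have e : (fun x : ℝ => arrTransfer Tarr n (k+1) ρ (x : Circle1)) =
        Lop (Tarr n (k+1)) (fun x : ℝ => arrTransfer Tarr n k ρ (x : Circle1)) := by
      funext x
      exact transfer_coe hl _ _ x
    refine ⟨by rw [e]; exact Lop_PI hl _ ih.1, fun φ hφ => ?_⟩
    have h1 := dual hl (Tarr n (k+1)) ih.1 hφ
    rw [← e] at h1
    rw [h1, ih.2 _ (hφ.comp _), List.range_succ, List.map_append, pull_append]
    rfl

theorem close_dC1 (S T : CM lam Astar) : Close (dC1 S T) S T := by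
  have b1 : BddAbove (Set.range fun x : Circle1 => dist (S.toMap x) (T.toMap x)) := by
    refine ⟨1/2, ?_⟩
    rintro _ ⟨x, rfl⟩
    simp only [dist_eq_norm]
    have := AddCircle.norm_le_half_period (1:ℝ) (x := S.toMap x - T.toMap x) one_ne_zero
    simpa using this
  have b2 : BddAbove (Set.range fun x : Circle1 => |S.dmap x - T.dmap x|) := by
    have hc : Continuous (fun x => |deriv S.F x - deriv T.F x|) :=
      ((S.contDiff.continuous_deriv (by norm_num)).sub
        (T.contDiff.continuous_deriv (by norm_num))).abs
    obtain ⟨B, hB⟩ := (isCompact_Icc (a := (0:ℝ)) (b := 1)).bddAbove_image hc.continuousOn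
    refine ⟨B, ?_⟩
    rintro _ ⟨x, rfl⟩
    have hx := (AddCircle.equivIco (1:ℝ) 0 x).2
    exact hB ⟨_, ⟨hx.1, by linarith [hx.2]⟩, rfl⟩
  have n1 : 0 ≤ ⨆ x : Circle1, dist (S.toMap x) (T.toMap x) := Real.iSup_nonneg fun x => dist_nonneg
  have n2 : 0 ≤ ⨆ x : Circle1, |S.dmap x - T.dmap x| := Real.iSup_nonneg fun x => abs_nonneg _
  constructor
  · intro x
    have := le_ciSup b1 (x : Circle1)
    simp only [toMap_coe] at this
    unfold dC1; linarith
  · intro x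
    have := le_ciSup b2 (x : Circle1)
    simp only [dmap_coe] at this
    unfold dC1; linarith

theorem Close.mono {a b : ℝ} {S T : CM lam Astar} (h : Close a S T) (hab : a ≤ b) : Close b S T :=
  ⟨fun x => (h.1 x).trans hab, fun x => (h.2 x).trans hab⟩

theorem Close.trans {a b : ℝ} {S R T : CM lam Astar} (h : Close a S R) (h' : Close b R T) :
    Close (a + b) S T :=
  ⟨fun x => (dist_triangle _ _ _).trans (add_le_add (h.1 x) (h'.1 x)),
   fun x => (abs_sub_le _ _ _).trans (add_le_add (h.2 x) (h'.2 x))⟩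

/-- duality step -/
theorem dual_main (hl : 1 < lam) (hA : 0 < Astar) (Tarr : ℕ → ℕ → CM lam Astar) (n k m : ℕ)
    (hm : m ≤ k) {T : CM lam Astar} {δ ε L : ℝ}
    (hc : ∀ j, k - m < j → j ≤ k → Close δ (Tarr n j) T) (hL : 0 < L) (hε : 0 < ε) (hε1 : ε ≤ 1)
    {ρ r : Circle1 → ℝ} {z : Circle1} (hρ : IsProbDensity ρ) (hz : LipOnArc z L ρ)
    (hr : IsSRBDensity T r) :
    l1norm (fun x => arrTransfer Tarr n k ρ x - r x) ≤ (2 * ((3 * L + 2) * ε) +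
      2 * (2 * (1 + L) / ε + 2 * (1 + L) / ε / ca lam Astar) * th lam Astar ^ k) +
      m * (CP lam Astar * δ) + 2 * th lam Astar ^ m := by
  obtain ⟨hP, hd⟩ := arr_dual hl Tarr n hρ.1 k
  have hrP := PI_coe hr.1.1
  unfold l1norm
  rw [← int_coe (fun x => |arrTransfer Tarr n k ρ x - r x|)]
  obtain ⟨φ, hφ, e⟩ := sign_exists (hP.sub hrP)
  rw [e, int_sub_mul hP hrP hφ, hd φ hφ]
  set l := (List.range k).map (fun i => Tarr n (i+1)) with hldef
  have hll : l.length = k := by simp [hldef]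
  have h1 := rho_decay hl hA hφ l hL hε hε1 hρ hz
  rw [int_sub_mul (PI_coe hρ.1) (PI.const 1) (pull_Tst l hφ), hll] at h1
  set l1 := l.take (k - m)
  set l2 := l.drop (k - m)
  have hl2 : l2.length = m := by simp [l2, hll]; omega
  have hsplit : pull l φ = pull l1 (pull l2 φ) := by
    rw [← pull_append, List.take_append_drop]
  have h2 : ∫ x in (0:ℝ)..1, (1:ℝ) * pull l φ x =
      ∫ x in (0:ℝ)..1, Lit l1 (fun _ => 1) x * pull l2 φ x := by
    rw [hsplit]
    exact (dual_list hl l1 (pull_Tst l2 hφ) (PI.const 1)).symm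
  have hK : Kc (ca lam Astar) (Lit l1 (fun _ => (1:ℝ))) := Lit_Kc hl hA l1 (Kc_one hl hA)
  have hK1 : ∫ x in (0:ℝ)..1, Lit l1 (fun _ => (1:ℝ)) x = 1 := by
    rw [Lit_int hl l1 (PI.const 1)]; simp
  have h3 := pert_list hl hA hφ l2 (T := T) (δ := δ) (by
    intro S hS
    obtain ⟨i, hi, rfl⟩ := List.mem_iff_getElem.1 hS
    have hi' : i < m := by rwa [hl2] at hi
    simp only [l2, hldef, List.getElem_drop, List.getElem_map, List.getElem_range]
    exact hc _ (by omega) (by omega)) hK hK1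
  have h4 := srb_conv hl hA hφ hrP (by rw [int_coe, hr.1.2.1]) (srb_inv T hr) (apx_coe hr.1.1)
    hK hK1 m
  rw [h2] at h1
  rw [hl2] at h3
  have := (abs_le.1 h1).2
  have := (abs_le.1 h3).2
  have := (abs_le.1 h4).2
  linarith

end QDSproof

open MeasureTheory Filter Topology Set UniformConvergence
namespace QDSproof
variable {lam Astar : ℝ}

theorem pow_floor_le {θ : ℝ} (h0 : 0 < θ) (h1 : θ < 1) (y : ℝ) :
    θ ^ ⌊y⌋₊ ≤ θ⁻¹ * θ ^ y := by
  rw [← Real.rpow_natCast, ← Real.rpow_neg_one, ← Real.rpow_add h0]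
  apply Real.rpow_le_rpow_of_exponent_ge h0 h1.le
  linarith [Nat.lt_floor_add_one y]

theorem theta_log {θ x : ℝ} (h0 : 0 < θ) (h1 : θ < 1) (hx : 0 < x) (c : ℝ) :
    θ ^ (c * Real.log x / (-Real.log θ)) = x ^ (-c) := by
  rw [Real.rpow_def_of_pos h0, Real.rpow_def_of_pos hx]
  have := (Real.log_neg h0 h1).ne
  congr 1
  field_simp

theorem core (hl : 1 < lam) (hA : 0 < Astar) {η : ℝ} (hη : η ∈ Set.Ioo (0 : ℝ) 1)
    (γ : ℝ → CM lam Astar) (hγ : HolderCurve η γ)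
    (Tarr : ℕ → ℕ → CM lam Astar) (hT : ArrayApprox η γ Tarr) {η' L : ℝ} (h0 : 0 < η')
    (h1 : η' < η) (hL : 0 < L) : ∃ C : ℝ, 0 < C ∧
      ∀ (ρ : Circle1 → ℝ) (z : Circle1), IsProbDensity ρ → LipOnArc z L ρ →
          ∀ n : ℕ, 1 ≤ n → ∀ t ∈ Set.Icc (0 : ℝ) 1,
            2 / (-Real.log (th lam Astar)) * Real.log n / n ≤ t →
            ∀ s ∈ Set.Icc (0 : ℝ) 1, ∀ r : Circle1 → ℝ, IsSRBDensity (γ s) r →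
              l1norm (fun x => arrTransfer Tarr n ⌊(n : ℝ) * t⌋₊ ρ x - r x) ≤
                C * (max (n:ℝ)⁻¹ |t - s|) ^ η' := by
  obtain ⟨hth0, hth1⟩ := th_mem hl hA
  obtain ⟨H, hH⟩ := hγ
  obtain ⟨M, hM⟩ := hT
  have hca : 0 < ca lam Astar := hA.trans (ca_gt hl hA)
  have hCP : 0 < CP lam Astar := CP_pos
  set θ := th lam Astar with hθ
  set τ := -Real.log θ with hτ
  have hτ0 : 0 < τ := neg_pos.2 (Real.log_neg hth0 hth1)
  set β := (η - η') / 3 with hβ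
  have hβ0 : 0 < β := by rw [hβ]; linarith
  set q := 1 / (τ * β) with hq
  have hq0 : 0 < q := by positivity
  set C1 := 2 * (3 * L + 2) + 4 * (1 + L) * (1 + 1 / ca lam Astar) * θ⁻¹ with hC1
  set C2 := q * (CP lam Astar * (|M| + |H| * (q + 1))) with hC2
  refine ⟨C1 + C2 + 2 * θ⁻¹, by positivity, ?_⟩
  intro ρ z hρ hz n hn t ht hbt s hs r hr
  have hn0 : (0:ℝ) < n := by exact_mod_cast hn
  have hn1 : (1:ℝ) ≤ n := by exact_mod_cast hn
  have hni : (n:ℝ)⁻¹ ≤ 1 := inv_le_one_of_one_le₀ hn1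
  set e := max (n:ℝ)⁻¹ |t - s| with he
  have hne : (n:ℝ)⁻¹ ≤ e := le_max_left _ _
  have hte : |t - s| ≤ e := le_max_right _ _
  have he0 : 0 < e := (inv_pos.2 hn0).trans_le hne
  have he1 : e ≤ 1 := by
    apply max_le hni
    rw [abs_le]; constructor <;> linarith [ht.1, ht.2, hs.1, hs.2]
  have hee : e ≤ e ^ η' := by
    conv_lhs => rw [← Real.rpow_one e]
    exact Real.rpow_le_rpow_of_exponent_ge he0 he1 (by linarith [hη.2])
  set k := ⌊(n : ℝ) * t⌋₊ with hk
  set m := ⌊(-1) * Real.log e / τ⌋₊ with hm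
  have hloge : Real.log e ≤ 0 := Real.log_nonpos he0.le he1
  have hmy0 : 0 ≤ (-1) * Real.log e / τ := div_nonneg (by linarith) hτ0.le
  have hnt : 2 * Real.log n / τ ≤ n * t := by
    rw [div_le_iff₀ hn0] at hbt
    calc _ = 2 / τ * Real.log n := by ring
      _ ≤ _ := by linarith
  have hlogn : 0 ≤ Real.log n := Real.log_nonneg hn1
  have hlen : -Real.log e ≤ Real.log n := by
    have := Real.log_le_log (inv_pos.2 hn0) hne
    rw [Real.log_inv] at this; linarith
  have hmk : m ≤ k := by
    apply Nat.floor_mono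
    refine le_trans ?_ hnt
    apply div_le_div_of_nonneg_right _ hτ0.le
    linarith
  have hθm : θ ^ m ≤ θ⁻¹ * e := by
    have := pow_floor_le hth0 hth1 ((-1) * Real.log e / τ)
    rw [theta_log hth0 hth1 he0, neg_neg, Real.rpow_one] at this
    exact this
  have hθk : θ ^ k ≤ θ⁻¹ * ((n:ℝ)⁻¹ * (n:ℝ)⁻¹) := by
    refine (pow_floor_le hth0 hth1 _).trans ?_
    have h2 : θ ^ ((n:ℝ) * t) ≤ θ ^ (2 * Real.log n / τ) :=
      Real.rpow_le_rpow_of_exponent_ge hth0 hth1.le hnt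
    rw [theta_log hth0 hth1 hn0, Real.rpow_neg hn0.le] at h2
    have : ((n:ℝ) ^ (2:ℝ))⁻¹ = (n:ℝ)⁻¹ * (n:ℝ)⁻¹ := by
      rw [show (2:ℝ) = ((2:ℕ):ℝ) by norm_num, Real.rpow_natCast, pow_two, mul_inv]
    rw [this] at h2
    exact mul_le_mul_of_nonneg_left h2 (by positivity)
  have hmq : (m:ℝ) ≤ q * e ^ (-β) := by
    refine (Nat.floor_le hmy0).trans ?_
    have := Real.log_le_rpow_div (x := e⁻¹) (by positivity) hβ0
    rw [Real.log_inv, Real.inv_rpow he0.le, ← Real.rpow_neg he0.le] at this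
    calc (-1) * Real.log e / τ ≤ (e ^ (-β) / β) / τ := by
          apply div_le_div_of_nonneg_right _ hτ0.le; linarith
      _ = q * e ^ (-β) := by rw [hq]; field_simp
  have heβ : 1 ≤ e ^ (-β) := Real.one_le_rpow_of_pos_of_le_one_of_nonpos he0 he1 (by linarith)
  have heη : 0 < e ^ η := Real.rpow_pos_of_pos he0 _
  set δ := (|M| + |H| * (m + 1)) * e ^ η with hδ
  have hc : ∀ j, k - m < j → j ≤ k → Close δ (Tarr n j) (γ s) := by
    intro j hj1 hj2
    have hkn : (k:ℝ) ≤ n * t := Nat.floor_le (mul_nonneg hn0.le ht.1)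
    have hkn' : n * t < k + 1 := Nat.lt_floor_add_one _
    have hjk : (j:ℝ) ≤ k := by exact_mod_cast hj2
    have hjm : (k:ℝ) + 1 ≤ j + m := by
      have : k + 1 ≤ j + m := by omega
      exact_mod_cast this
    have hnn : (n:ℝ) * (j / n) = j := by field_simp
    have hjt : (j:ℝ) / n ≤ t := by rw [div_le_iff₀ hn0]; linarith
    have hj0 : (0:ℝ) ≤ j / n := by positivity
    have hj : (j:ℝ) / n ∈ Icc (0:ℝ) 1 := ⟨hj0, hjt.trans ht.2⟩
    have a1 := hM n hn _ hj
    rw [hnn, Nat.floor_natCast] at a1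
    have a2 := hH _ hj s hs
    have hnη : (0:ℝ) < (n:ℝ) ^ η := Real.rpow_pos_of_pos hn0 _
    have a3 : dC1 (Tarr n j) (γ (j / n)) ≤ |M| * e ^ η := by
      have b1 : dC1 (Tarr n j) (γ (j / n)) ≤ M * ((n:ℝ)⁻¹) ^ η := by
        rw [Real.inv_rpow hn0.le, ← div_eq_mul_inv, le_div_iff₀ hnη]; linarith
      have b2 : ((n:ℝ)⁻¹) ^ η ≤ e ^ η := Real.rpow_le_rpow (by positivity) hne hη.1.le
      refine b1.trans (mul_le_mul (le_abs_self _) b2 (by positivity) (abs_nonneg _))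
    have a4 : |(j:ℝ) / n - s| ≤ (m + 1) * e := by
      have b1 := abs_sub_le ((j:ℝ) / n) t s
      have b2 : |(j:ℝ) / n - t| ≤ m * e := by
        rw [abs_sub_comm, abs_of_nonneg (by linarith)]
        have : t - j / n ≤ m * (n:ℝ)⁻¹ := by
          rw [← div_eq_mul_inv, le_div_iff₀ hn0, sub_mul, div_mul_cancel₀ _ hn0.ne']
          linarith
        exact this.trans (by gcongr)
      linarith
    have a5 : |(j:ℝ) / n - s| ^ η ≤ (m + 1) * e ^ η := by
      refine (Real.rpow_le_rpow (abs_nonneg _) a4 hη.1.le).trans ?_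
      rw [Real.mul_rpow (by positivity) he0.le]
      apply mul_le_mul_of_nonneg_right _ heη.le
      conv_rhs => rw [← Real.rpow_one ((m:ℝ) + 1)]
      apply Real.rpow_le_rpow_of_exponent_le _ hη.2.le
      linarith [Nat.cast_nonneg (α := ℝ) m]
    have a6 : dC1 (γ (j / n)) (γ s) ≤ |H| * ((m + 1) * e ^ η) :=
      a2.trans (mul_le_mul (le_abs_self _) a5 (by positivity) (abs_nonneg _))
    exact ((close_dC1 _ _).trans (close_dC1 _ _)).mono (by rw [hδ]; linarith)
  have key := dual_main hl hA Tarr n k m hmk hc hL (inv_pos.2 hn0) hni hρ hz hr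
  refine key.trans ?_
  have t1 : 2 * ((3 * L + 2) * (n:ℝ)⁻¹) + 2 * (2 * (1 + L) / (n:ℝ)⁻¹ +
      2 * (1 + L) / (n:ℝ)⁻¹ / ca lam Astar) * θ ^ k ≤ C1 * e ^ η' := by
    have : 2 * (2 * (1 + L) / (n:ℝ)⁻¹ + 2 * (1 + L) / (n:ℝ)⁻¹ / ca lam Astar) * θ ^ k ≤
        2 * (2 * (1 + L) / (n:ℝ)⁻¹ + 2 * (1 + L) / (n:ℝ)⁻¹ / ca lam Astar) *
          (θ⁻¹ * ((n:ℝ)⁻¹ * (n:ℝ)⁻¹)) := mul_le_mul_of_nonneg_left hθk (by positivity)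
    have h2 : 2 * (2 * (1 + L) / (n:ℝ)⁻¹ + 2 * (1 + L) / (n:ℝ)⁻¹ / ca lam Astar) *
          (θ⁻¹ * ((n:ℝ)⁻¹ * (n:ℝ)⁻¹)) =
          4 * (1 + L) * (1 + 1 / ca lam Astar) * θ⁻¹ * (n:ℝ)⁻¹ := by
      field_simp; ring
    have h3 : C1 * (n:ℝ)⁻¹ ≤ C1 * e ^ η' :=
      mul_le_mul_of_nonneg_left (hne.trans hee) (by positivity)
    have h4 : C1 * (n:ℝ)⁻¹ = 2 * ((3 * L + 2) * (n:ℝ)⁻¹) +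
      4 * (1 + L) * (1 + 1 / ca lam Astar) * θ⁻¹ * (n:ℝ)⁻¹ := by rw [hC1]; ring
    linarith
  have t2 : (m:ℝ) * (CP lam Astar * δ) ≤ C2 * e ^ η' := by
    have b1 : |M| + |H| * (m + 1) ≤ (|M| + |H| * (q + 1)) * e ^ (-β) := by
      have c1 := mul_le_mul_of_nonneg_left heβ (abs_nonneg M)
      have c2 := mul_le_mul_of_nonneg_left (show (m:ℝ) + 1 ≤ (q + 1) * e ^ (-β) by linarith)
        (abs_nonneg H)
      linarith
    have b2 : (m:ℝ) * (CP lam Astar * δ) ≤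
        (q * e ^ (-β)) * (CP lam Astar * ((|M| + |H| * (q + 1)) * e ^ (-β) * e ^ η)) := by
      rw [hδ]; gcongr
    have b3 : e ^ (-β) * e ^ (-β) * e ^ η ≤ e ^ η' := by
      rw [← Real.rpow_add he0, ← Real.rpow_add he0]
      apply Real.rpow_le_rpow_of_exponent_ge he0 he1
      rw [hβ]; linarith
    calc _ ≤ _ := b2
      _ = C2 * (e ^ (-β) * e ^ (-β) * e ^ η) := by rw [hC2]; ring
      _ ≤ _ := mul_le_mul_of_nonneg_left b3 (by positivity)
  have t3 : 2 * θ ^ m ≤ 2 * θ⁻¹ * e ^ η' := by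
    have := mul_le_mul_of_nonneg_left hee (inv_pos.2 hth0).le
    linarith
  linarith

theorem max_rpow_le {a b c : ℝ} (ha : 0 ≤ a) (hb : 0 ≤ b) : (max a b) ^ c ≤ a ^ c + b ^ c := by
  have := Real.rpow_nonneg ha c
  have := Real.rpow_nonneg hb c
  rcases max_choice a b with h | h <;> rw [h] <;> linarith

end QDSproof

theorem statement8 {lam Astar : ℝ} (hlam : 1 < lam) (hA : 0 < Astar)
    {η : ℝ} (hη : η ∈ Set.Ioo (0 : ℝ) 1)
    (γ : ℝ → CM lam Astar) (hγ : HolderCurve η γ)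
    (Tarr : ℕ → ℕ → CM lam Astar) (hT : ArrayApprox η γ Tarr) :
    ∃ b : ℝ, 0 < b ∧
      ∀ η' : ℝ, η' < η → ∀ L : ℝ, 0 < L → ∃ C : ℝ, 0 < C ∧
        ∀ (ρ : Circle1 → ℝ) (z : Circle1), IsProbDensity ρ → LipOnArc z L ρ →
          ∀ n : ℕ, 1 ≤ n → ∀ t ∈ Set.Icc (0 : ℝ) 1, b * Real.log n / n ≤ t →
            (∀ ρhatt : Circle1 → ℝ, IsSRBDensity (γ t) ρhatt →
              l1norm (fun x => arrTransfer Tarr n ⌊(n : ℝ) * t⌋₊ ρ x - ρhatt x) ≤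
                C * (n : ℝ) ^ (-η')) ∧
            (∀ s ∈ Set.Icc (0 : ℝ) 1, ∀ ρhats : Circle1 → ℝ, IsSRBDensity (γ s) ρhats →
              l1norm (fun x => arrTransfer Tarr n ⌊(n : ℝ) * t⌋₊ ρ x - ρhats x) ≤
                C * ((n : ℝ) ^ (-η') + |t - s| ^ η')) := by
  obtain ⟨hth0, hth1⟩ := QDSproof.th_mem hlam hA
  refine ⟨2 / (-Real.log (QDSproof.th lam Astar)),
    div_pos two_pos (neg_pos.2 (Real.log_neg hth0 hth1)), ?_⟩
  intro η' hη' L hL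
  have hmain : ∃ C : ℝ, 0 < C ∧
      ∀ (ρ : Circle1 → ℝ) (z : Circle1), IsProbDensity ρ → LipOnArc z L ρ →
          ∀ n : ℕ, 1 ≤ n → ∀ t ∈ Set.Icc (0 : ℝ) 1,
            2 / (-Real.log (QDSproof.th lam Astar)) * Real.log n / n ≤ t →
            ∀ s ∈ Set.Icc (0 : ℝ) 1, ∀ r : Circle1 → ℝ, IsSRBDensity (γ s) r →
              l1norm (fun x => arrTransfer Tarr n ⌊(n : ℝ) * t⌋₊ ρ x - r x) ≤
                C * (n : ℝ) ^ (-η') ∨ l1norm (fun x => arrTransfer Tarr n ⌊(n : ℝ) * t⌋₊ ρ x - r x) ≤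
                C * (max (n:ℝ)⁻¹ |t - s|) ^ η' := by
    rcases lt_or_ge 0 η' with h | h
    · obtain ⟨C, hC, H⟩ := QDSproof.core hlam hA hη γ hγ Tarr hT h hη' hL
      exact ⟨C, hC, fun ρ z hρ hz n hn t ht hb s hs r hr =>
        Or.inr (H ρ z hρ hz n hn t ht hb s hs r hr)⟩
    · obtain ⟨C, hC, H⟩ := QDSproof.core hlam hA hη γ hγ Tarr hT (half_pos hη.1)
        (half_lt_self hη.1) hL
      refine ⟨C, hC, fun ρ z hρ hz n hn t ht hb s hs r hr =>
        Or.inl ((H ρ z hρ hz n hn t ht hb s hs r hr).trans ?_)⟩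
      have hn1 : (1:ℝ) ≤ n := by exact_mod_cast hn
      apply mul_le_mul_of_nonneg_left _ hC.le
      refine le_trans (b := 1) ?_ (Real.one_le_rpow hn1 (by linarith))
      apply Real.rpow_le_one (le_max_of_le_right (abs_nonneg _)) _ (half_pos hη.1).le
      apply max_le (inv_le_one_of_one_le₀ hn1)
      rw [abs_le]; constructor <;> linarith [ht.1, ht.2, hs.1, hs.2]
  obtain ⟨C, hC, H⟩ := hmain
  refine ⟨C, hC, fun ρ z hρ hz n hn t ht hb => ⟨fun r hr => ?_, fun s hs r hr => ?_⟩⟩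
  · have hni : (0:ℝ) ≤ (n:ℝ)⁻¹ := by positivity
    rcases H ρ z hρ hz n hn t ht hb t ht r hr with h | h
    · exact h
    · rw [sub_self, abs_zero, max_eq_left hni, Real.inv_rpow (Nat.cast_nonneg n),
        ← Real.rpow_neg (Nat.cast_nonneg n)] at h
      exact h
  · have hp : 0 ≤ |t - s| ^ η' := Real.rpow_nonneg (abs_nonneg _) _
    rcases H ρ z hρ hz n hn t ht hb s hs r hr with h | h
    · refine h.trans (mul_le_mul_of_nonneg_left (by linarith) hC.le)
    · refine h.trans (mul_le_mul_of_nonneg_left ?_ hC.le)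
      have := QDSproof.max_rpow_le (c := η') (inv_nonneg.2 (Nat.cast_nonneg (α := ℝ) n))
        (abs_nonneg (t - s))
      rwa [Real.inv_rpow (Nat.cast_nonneg n), ← Real.rpow_neg (Nat.cast_nonneg n)] at this
end

section
/- There exists a constant ϑ ∈ (0,1) such that the following holds. Let μ be a probability measure on 𝕊 whose density is Lipschitz on J_z with constant L > 0 for some z ∈ 𝕊; let k ≥ 2; let f⁽¹⁾, …, f⁽ᵏ⁾ : 𝕊 → ℝ be Lipschitz continuous; and let 0 ≤ t₁ < ⋯ < t_k ≤ 1. Then for all m ∈ {1, …, k−1} and all n ≥ 0, |μ(f⁽¹⁾_{n,⌊nt₁⌋} ⋯ f⁽ᵏ⁾_{n,⌊nt_k⌋}) − μ(f⁽¹⁾_{n,⌊nt₁⌋} ⋯ f⁽ᵐ⁾_{n,⌊nt_m⌋}) · μ(f⁽ᵐ⁺¹⁾_{n,⌊nt_{m+1}⌋} ⋯ f⁽ᵏ⁾_{n,⌊nt_k⌋})| ≤ C ϑ^{n(t_{m+1} − t_m)}, where C > 0 depends only on k, the Lipschitz norms of the f⁽ʲ⁾, and L. -/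
open MeasureTheory Filter Topology Set UniformConvergence

namespace Dec
variable {lam Astar : ℝ}

lemma F_diff (T : CM lam Astar) : Differentiable ℝ T.F := T.contDiff.differentiable (by norm_num)

lemma F_expand (T : CM lam Astar) {x y : ℝ} (h : x ≤ y) : lam * (y - x) ≤ T.F y - T.F x :=
  mul_sub_le_image_sub_of_le_deriv (F_diff T) T.expanding h

lemma dF_cont (T : CM lam Astar) : Continuous (deriv T.F) :=
  T.contDiff.continuous_deriv (by norm_num)

lemma dF_lip (T : CM lam Astar) (x y : ℝ) :
    |deriv T.F x - deriv T.F y| ≤ Astar * |x - y| := by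
  have h := Convex.norm_image_sub_le_of_norm_deriv_le (f := deriv T.F) (s := univ) (C := Astar)
    (x := y) (y := x)
    (fun x _ => (T.contDiff.differentiable_deriv_two) x) (fun x _ => T.second_bound x)
    convex_univ (mem_univ _) (mem_univ _)
  simpa using h

lemma F_mono (hlam : 1 < lam) (T : CM lam Astar) : StrictMono T.F := by
  intro x y h
  have := F_expand T h.le
  nlinarith [mul_pos (by linarith : (0:ℝ) < lam) (sub_pos.2 h)]

lemma F_surj (hlam : 1 < lam) (T : CM lam Astar) : Function.Surjective T.F := by
  apply (F_diff T).continuous.surjective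
  · refine tendsto_atTop_mono' atTop (f₁ := fun x => x + T.F 0) ?_
      (tendsto_atTop_add_const_right _ _ tendsto_id)
    filter_upwards [eventually_ge_atTop 0] with x hx
    have := F_expand T hx
    nlinarith
  · refine tendsto_atBot_mono' atBot (f₁ := fun x => x + T.F 0) ?_
      (tendsto_atBot_add_const_right _ _ tendsto_id)
    filter_upwards [eventually_le_atBot 0] with x hx
    have := F_expand T hx
    nlinarith

/-- inverse of the lift -/
noncomputable def sg (T : CM lam Astar) : ℝ → ℝ := Function.invFun T.F

/-- derivative of the inverse -/
noncomputable def wt (T : CM lam Astar) (u : ℝ) : ℝ := (deriv T.F (sg T u))⁻¹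

/-- transfer operator on the lift -/
noncomputable def PP (T : CM lam Astar) (ψ : ℝ → ℝ) (y : ℝ) : ℝ :=
  ∑ i ∈ Finset.range T.deg.toNat, ψ (sg T (y + i)) * wt T (y + i)

lemma F_sg (hlam : 1 < lam) (T : CM lam Astar) (u : ℝ) : T.F (sg T u) = u :=
  Function.rightInverse_invFun (F_surj hlam T) u

lemma sg_F (hlam : 1 < lam) (T : CM lam Astar) (u : ℝ) : sg T (T.F u) = u :=
  Function.leftInverse_invFun (F_mono hlam T).injective u

lemma sg_mono (hlam : 1 < lam) (T : CM lam Astar) : Monotone (sg T) := by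
  intro u v h
  rw [← (F_mono hlam T).le_iff_le, F_sg hlam, F_sg hlam]; exact h

lemma sg_lip (hlam : 1 < lam) (T : CM lam Astar) (u v : ℝ) :
    |sg T u - sg T v| ≤ |u - v| / lam := by
  rw [le_div_iff₀ (by linarith)]
  wlog h : u ≤ v generalizing u v
  · rw [abs_sub_comm, abs_sub_comm u]; exact this v u (by linarith)
  have h1 := F_expand T (sg_mono hlam T h)
  rw [F_sg hlam, F_sg hlam] at h1
  have h2 := sg_mono hlam T h
  rw [abs_sub_comm, abs_sub_comm u, abs_of_nonneg (by linarith), abs_of_nonneg (by linarith)]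
  linarith

lemma sg_lip' (hlam : 1 < lam) (T : CM lam Astar) (u v : ℝ) :
    |sg T u - sg T v| ≤ |u - v| :=
  (sg_lip hlam T u v).trans (div_le_self (abs_nonneg _) hlam.le)

lemma sg_cont (hlam : 1 < lam) (T : CM lam Astar) : Continuous (sg T) := by
  have : LipschitzWith 1 (sg T) := LipschitzWith.of_dist_le_mul (fun x y => by
    simpa [Real.dist_eq] using sg_lip' hlam T x y)
  exact this.continuous

lemma dF_pos (hlam : 1 < lam) (T : CM lam Astar) (x : ℝ) : 1 < deriv T.F x :=
  hlam.trans_le (T.expanding x)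

lemma wt_pos (hlam : 1 < lam) (T : CM lam Astar) (u : ℝ) : 0 < wt T u :=
  inv_pos.2 (by linarith [dF_pos hlam T (sg T u)])

lemma wt_cont (hlam : 1 < lam) (T : CM lam Astar) : Continuous (wt T) :=
  ((dF_cont T).comp (sg_cont hlam T)).inv₀ (fun x => by
    have := dF_pos hlam T (sg T x); simp only [Function.comp]; linarith)

lemma sg_deriv (hlam : 1 < lam) (T : CM lam Astar) (u : ℝ) : HasDerivAt (sg T) (wt T u) u :=
  HasDerivAt.of_local_left_inverse (sg_cont hlam T).continuousAt
    ((F_diff T) (sg T u)).hasDerivAt (by linarith [dF_pos hlam T (sg T u)])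
    (Eventually.of_forall (F_sg hlam T))

lemma wt_lip (hlam : 1 < lam) (hA : 0 < Astar) (T : CM lam Astar) (u v : ℝ) :
    |wt T u - wt T v| ≤ Astar * |u - v| * wt T v := by
  have hu := dF_pos hlam T (sg T u)
  have hv := dF_pos hlam T (sg T v)
  have e : wt T u - wt T v = (deriv T.F (sg T v) - deriv T.F (sg T u)) * wt T u * wt T v := by
    unfold wt; field_simp
  rw [e, abs_mul, abs_mul, abs_of_pos (wt_pos hlam T u), abs_of_pos (wt_pos hlam T v)]
  have h1 : wt T u ≤ 1 := inv_le_one_of_one_le₀ hu.le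
  have h2 := dF_lip T (sg T v) (sg T u)
  have h3 := sg_lip' hlam T v u
  rw [abs_sub_comm v u] at h3
  apply mul_le_mul_of_nonneg_right _ (wt_pos hlam T v).le
  calc _ ≤ |deriv T.F (sg T v) - deriv T.F (sg T u)| * 1 :=
        mul_le_mul_of_nonneg_left h1 (abs_nonneg _)
    _ ≤ Astar * |u - v| := by
        rw [mul_one]; exact h2.trans (mul_le_mul_of_nonneg_left h3 hA.le)

lemma wt_exp (hlam : 1 < lam) (hA : 0 < Astar) (T : CM lam Astar) (u v : ℝ) :
    wt T u ≤ Real.exp (Astar * |u - v|) * wt T v := by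
  have h := (abs_le.1 (wt_lip hlam hA T u v)).2
  have h2 := Real.add_one_le_exp (Astar * |u - v|)
  nlinarith [wt_pos hlam T v]

lemma PP_cont (hlam : 1 < lam) (T : CM lam Astar) {ψ : ℝ → ℝ} (h : Continuous ψ) :
    Continuous (PP T ψ) := by
  have h1 := sg_cont hlam T
  have h2 := wt_cont hlam T
  unfold PP
  fun_prop

lemma deg_pos (hlam : 1 < lam) (T : CM lam Astar) : 0 < T.deg := by
  have h := F_expand T (zero_le_one)
  have h2 := T.lift_add_one 0
  rw [zero_add] at h2
  have : (0:ℝ) < T.deg := by linarith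
  exact_mod_cast this

lemma deg_cast (hlam : 1 < lam) (T : CM lam Astar) : ((T.deg.toNat : ℕ) : ℝ) = T.deg := by
  have : ((T.deg.toNat : ℕ) : ℤ) = T.deg := Int.toNat_of_nonneg (deg_pos hlam T).le
  exact_mod_cast this

lemma F_add_int (T : CM lam Astar) (x : ℝ) (k : ℤ) : T.F (x + k) = T.F x + k * T.deg := by
  induction k using Int.induction_on with
  | zero => simp
  | succ i ih =>
    have := T.lift_add_one (x + i)
    push_cast at *
    rw [← add_assoc, this, ih]; ring
  | pred i ih =>
    have := T.lift_add_one (x + (-i - 1))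
    push_cast at *
    rw [show x + (-(i:ℝ) - 1) + 1 = x + -i by ring, ih] at this
    linarith

lemma coe_add_int (x : ℝ) (k : ℤ) : ((x + (k : ℝ) : ℝ) : Circle1) = (x : Circle1) := by
  have h : ((k : ℝ) : Circle1) = 0 := by
    rw [AddCircle.coe_eq_zero_iff]; exact ⟨k, by simp⟩
  rw [AddCircle.coe_add, h, add_zero]

lemma toMap_coe (T : CM lam Astar) (x : ℝ) : T.toMap (x : Circle1) = (T.F x : Circle1) := by
  unfold CM.toMap
  have h : (AddCircle.equivIco 1 0 (x : Circle1) : ℝ) = Int.fract x := by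
    have := AddCircle.coe_equivIco_mk_apply (p := (1:ℝ)) x
    rw [div_one, mul_one] at this
    exact this
  rw [h]
  have h2 : T.F x = T.F (Int.fract x) + ((⌊x⌋ * T.deg : ℤ) : ℝ) := by
    conv_lhs => rw [← Int.fract_add_floor x]
    rw [F_add_int]; push_cast; ring
  rw [h2, coe_add_int]

lemma toMap_cont (T : CM lam Astar) : Continuous T.toMap := by
  have : Continuous (fun x : ℝ => T.toMap (x : Circle1)) := by
    simp_rw [toMap_coe]
    exact (AddCircle.continuous_mk' 1).comp (F_diff T).continuous
  exact continuous_coinduced_dom.2 this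

lemma mem_sg (hlam : 1 < lam) (T : CM lam Astar) {z y : ℝ} {i : ℕ}
    (hy : y ∈ Icc (T.F z) (T.F z + 1)) (hi : i ∈ Finset.range T.deg.toNat) :
    sg T (y + i) ∈ Icc z (z + 1) := by
  have hi' : (i:ℝ) + 1 ≤ T.deg := by
    rw [← deg_cast hlam]; exact_mod_cast Finset.mem_range.1 hi
  have h0 : (0:ℝ) ≤ i := Nat.cast_nonneg i
  constructor
  · rw [← (F_mono hlam T).le_iff_le, F_sg hlam]; linarith [hy.1]
  · rw [← (F_mono hlam T).le_iff_le, F_sg hlam, T.lift_add_one]; linarith [hy.2]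

lemma PP_int (hlam : 1 < lam) (T : CM lam Astar) {ψ : ℝ → ℝ} (h : Continuous ψ)
    {g : Circle1 → ℝ} (hg : Continuous g) (z : ℝ) :
    ∫ x in z..z+1, ψ x * g (T.toMap x) = ∫ y in (T.F z)..(T.F z + 1), PP T ψ y * g y := by
  have hgc : Continuous (fun x : ℝ => g x) := hg.comp (AddCircle.continuous_mk' 1)
  have h1 := sg_cont hlam T
  have h2 := wt_cont hlam T
  set q : ℝ → ℝ := fun u => ψ (sg T u) * wt T u * g u with hq
  have hqc : Continuous q := by fun_prop
  have e1 : ∀ y, PP T ψ y * g y = ∑ i ∈ Finset.range T.deg.toNat, q (y + i) := by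
    intro y
    unfold PP
    rw [Finset.sum_mul]
    apply Finset.sum_congr rfl
    intro i _
    have : ((y + (i:ℝ) : ℝ) : Circle1) = (y : Circle1) := by
      exact_mod_cast coe_add_int y i
    simp only [hq, this]
  simp_rw [e1]
  rw [intervalIntegral.integral_finsetSum (f := fun (i : ℕ) y => q (y + (i:ℝ)))
    (fun i _ => (by fun_prop : Continuous fun y => q (y + (i:ℝ))).intervalIntegrable _ _)]
  simp_rw [intervalIntegral.integral_comp_add_right]
  have e2 := intervalIntegral.sum_integral_adjacent_intervals (μ := volume) (f := q)
    (a := fun i : ℕ => T.F z + i) (n := T.deg.toNat) (fun k _ => hqc.intervalIntegrable _ _)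
  have e3 : ∀ i : ℕ, T.F z + 1 + i = T.F z + ((i + 1 : ℕ) : ℝ) := by intro i; push_cast; ring
  simp_rw [e3]
  rw [e2, deg_cast hlam, Nat.cast_zero, add_zero, ← T.lift_add_one]
  have e4 := intervalIntegral.integral_comp_mul_deriv (a := T.F z) (b := T.F (z+1))
    (f := sg T) (f' := wt T) (g := fun x => ψ x * g (T.toMap x))
    (fun x _ => sg_deriv hlam T x) h2.continuousOn
    (h.mul (hg.comp ((toMap_cont T).comp (AddCircle.continuous_mk' 1))))
  rw [sg_F hlam, sg_F hlam] at e4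
  rw [← e4]
  apply intervalIntegral.integral_congr
  intro u _
  simp only [hq, Function.comp, toMap_coe, F_sg hlam]
  ring

/-- cone of log-Lipschitz functions on `[z,z+1]` -/
def Cone (M z : ℝ) (ψ : ℝ → ℝ) : Prop :=
  (∀ x ∈ Icc z (z + 1), 0 ≤ ψ x) ∧
    ∀ x ∈ Icc z (z + 1), ∀ y ∈ Icc z (z + 1), ψ x ≤ Real.exp (M * |x - y|) * ψ y

lemma PP_mono (hlam : 1 < lam) (T : CM lam Astar) {z : ℝ} {ψ : ℝ → ℝ}
    (h : ∀ x ∈ Icc z (z + 1), 0 ≤ ψ x) : ∀ y ∈ Icc (T.F z) (T.F z + 1), 0 ≤ PP T ψ y := by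
  intro y hy
  exact Finset.sum_nonneg fun i hi => mul_nonneg (h _ (mem_sg hlam T hy hi)) (wt_pos hlam T _).le

lemma PP_cone (hlam : 1 < lam) (hA : 0 < Astar) (T : CM lam Astar) {z M : ℝ} (hM : 0 ≤ M)
    {ψ : ℝ → ℝ} (h : Cone M z ψ) : Cone (M / lam + Astar) (T.F z) (PP T ψ) := by
  refine ⟨PP_mono hlam T h.1, ?_⟩
  intro x hx y hy
  unfold PP
  rw [Finset.mul_sum]
  apply Finset.sum_le_sum
  intro i hi
  have mx := mem_sg hlam T hx hi
  have my := mem_sg hlam T hy hi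
  have e1 := h.2 _ mx _ my
  have e2 := wt_exp hlam hA T (x + i) (y + i)
  have e3 : x + i - (y + i) = x - y := by ring
  have e4 := sg_lip hlam T (x + i) (y + i)
  rw [e3] at e2 e4
  have e5 : ψ (sg T (x + i)) ≤ Real.exp (M / lam * |x - y|) * ψ (sg T (y + i)) := by
    refine e1.trans (mul_le_mul_of_nonneg_right (Real.exp_le_exp.2 ?_) (h.1 _ my))
    calc _ ≤ M * (|x - y| / lam) := mul_le_mul_of_nonneg_left e4 hM
      _ = _ := by ring
  calc _ ≤ (Real.exp (M / lam * |x - y|) * ψ (sg T (y + i))) *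
        (Real.exp (Astar * |x - y|) * wt T (y + i)) :=
        mul_le_mul e5 e2 (wt_pos hlam T _).le
          (mul_nonneg (Real.exp_pos _).le (h.1 _ my))
    _ = _ := by rw [add_mul, Real.exp_add]; ring

lemma PP_integral (hlam : 1 < lam) (T : CM lam Astar) {ψ : ℝ → ℝ} (h : Continuous ψ) (z : ℝ) :
    ∫ y in (T.F z)..(T.F z + 1), PP T ψ y = ∫ x in z..z+1, ψ x := by
  have := PP_int hlam T h (g := fun _ => 1) continuous_const z
  simpa using this.symm

lemma int_mono {z : ℝ} {f g : ℝ → ℝ} (hf : Continuous f) (hg : Continuous g)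
    (h : ∀ x ∈ Icc z (z + 1), f x ≤ g x) :
    ∫ x in z..z+1, f x ≤ ∫ x in z..z+1, g x :=
  intervalIntegral.integral_mono_on (by linarith) (hf.intervalIntegrable _ _)
    (hg.intervalIntegrable _ _) h

lemma int_const (z c : ℝ) : ∫ _ in z..z+1, c = c := by simp

lemma abs_int_le {z : ℝ} {f g : ℝ → ℝ} (hf : Continuous f) (hg : Continuous g)
    (h : ∀ x ∈ Icc z (z + 1), |f x| ≤ g x) :
    |∫ x in z..z+1, f x| ≤ ∫ x in z..z+1, g x := by
  rw [abs_le]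
  constructor
  · rw [← intervalIntegral.integral_neg]
    exact int_mono hg.neg hf fun x hx => (abs_le.1 (h x hx)).1
  · exact int_mono hf hg fun x hx => (abs_le.1 (h x hx)).2

lemma cone_exp {M z : ℝ} (hM : 0 ≤ M) {ψ : ℝ → ℝ} (h : Cone M z ψ) {x y : ℝ}
    (hx : x ∈ Icc z (z + 1)) (hy : y ∈ Icc z (z + 1)) : ψ x ≤ Real.exp M * ψ y := by
  refine (h.2 x hx y hy).trans (mul_le_mul_of_nonneg_right (Real.exp_le_exp.2 ?_) (h.1 y hy))
  have : |x - y| ≤ 1 := by rw [abs_le]; constructor <;> linarith [hx.1, hx.2, hy.1, hy.2]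
  nlinarith

lemma cone_lower {M z : ℝ} (hM : 0 ≤ M) {ψ : ℝ → ℝ} (hc : Continuous ψ) (h : Cone M z ψ) {y : ℝ}
    (hy : y ∈ Icc z (z + 1)) : ∫ x in z..z+1, ψ x ≤ Real.exp M * ψ y := by
  rw [← int_const z (Real.exp M * ψ y)]
  exact int_mono hc continuous_const fun x hx => cone_exp hM h hx hy

lemma cone_upper {M z : ℝ} (hM : 0 ≤ M) {ψ : ℝ → ℝ} (hc : Continuous ψ) (h : Cone M z ψ) {y : ℝ}
    (hy : y ∈ Icc z (z + 1)) : ψ y ≤ Real.exp M * ∫ x in z..z+1, ψ x := by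
  rw [← int_const z (ψ y), ← intervalIntegral.integral_const_mul]
  exact int_mono continuous_const (hc.const_mul _) fun x hx => cone_exp hM h hy hx

lemma cone_sub {M0 M κ c z : ℝ} (hM0 : 0 < M0) (hMM : M0 < M)
    (hκ : κ = (M - M0) * Real.exp (-M) / M) {ψ : ℝ → ℝ} (h : Cone M0 z ψ)
    (hcψ : ∀ x ∈ Icc z (z + 1), c ≤ κ * ψ x) :
    Cone M z (fun x => ψ x - c) := by
  have hM : 0 < M := hM0.trans hMM
  have hκ1 : κ ≤ 1 := by
    rw [hκ, div_le_one hM]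
    have : Real.exp (-M) ≤ 1 := Real.exp_le_one_iff.2 (by linarith)
    nlinarith
  constructor
  · intro x hx
    have := hcψ x hx
    have := h.1 x hx
    nlinarith
  · intro x hx y hy
    set d := |x - y| with hd
    have d0 : 0 ≤ d := abs_nonneg _
    have d1 : d ≤ 1 := by rw [hd, abs_le]; constructor <;> linarith [hx.1, hx.2, hy.1, hy.2]
    have a1 := h.2 x hx y hy
    have a2 := hcψ y hy
    have a3 := h.1 y hy
    -- exp (M d) - 1 ≤ d M exp M
    have b1 : Real.exp (M * d) - 1 ≤ d * M * Real.exp M := by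
      have e1 := Real.add_one_le_exp (-(M * d))
      have e2 : Real.exp (-(M * d)) * Real.exp (M * d) = 1 := by rw [← Real.exp_add]; simp
      have e3 : Real.exp (M * d) ≤ Real.exp M := Real.exp_le_exp.2 (by nlinarith)
      have e4 := Real.exp_pos (M * d)
      have e5 : 0 ≤ M * d := by positivity
      nlinarith
    have b2 : (M - M0) * d ≤ Real.exp (M * d) - Real.exp (M0 * d) := by
      have e1 := Real.add_one_le_exp ((M - M0) * d)
      have e2 : Real.exp (M * d) = Real.exp ((M - M0) * d) * Real.exp (M0 * d) := by
        rw [← Real.exp_add]; ring_nf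
      have e3 : 1 ≤ Real.exp (M0 * d) := Real.one_le_exp (by positivity)
      have e4 : 0 ≤ (M - M0) * d := mul_nonneg (by linarith) d0
      nlinarith
    have b3 : κ * (Real.exp (M * d) - 1) ≤ Real.exp (M * d) - Real.exp (M0 * d) := by
      have k0 : 0 ≤ κ := by
        rw [hκ]; exact div_nonneg (mul_nonneg (by linarith) (Real.exp_pos _).le) hM.le
      calc _ ≤ κ * (d * M * Real.exp M) := mul_le_mul_of_nonneg_left b1 k0
        _ = (M - M0) * d := by
          rw [hκ, Real.exp_neg]
          have := (Real.exp_pos M).ne'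
          field_simp
        _ ≤ _ := b2
    have b4 : 0 ≤ Real.exp (M * d) - 1 := by
      have : 1 ≤ Real.exp (M * d) := Real.one_le_exp (by positivity)
      linarith
    have b5 := mul_le_mul_of_nonneg_left a2 b4
    have b6 := mul_le_mul_of_nonneg_right b3 a3
    simp only
    nlinarith

/-- composition of `N` maps starting after time `a` -/
noncomputable def itC (Ts : ℕ → CM lam Astar) : ℕ → ℕ → Circle1 → Circle1
  | _, 0 => id
  | a, (N+1) => itC Ts (a+1) N ∘ (Ts (a+1)).toMap

lemma itC_cont (Ts : ℕ → CM lam Astar) (N : ℕ) : ∀ a, Continuous (itC Ts a N) := by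
  induction N with
  | zero => intro a; exact continuous_id
  | succ N ih => intro a; exact (ih (a+1)).comp (toMap_cont _)

lemma decay (hlam : 1 < lam) (hA : 0 < Astar) {M0 M κ θ : ℝ} (hM0 : 0 < M0) (hMM : M0 < M)
    (hML : M / lam + Astar = M0) (hκ : κ = (M - M0) * Real.exp (-M) / M)
    (hθ : θ = 1 - κ * Real.exp (-M0)) (Ts : ℕ → CM lam Astar) (N : ℕ) :
    ∀ (a : ℕ) (z R Gb : ℝ) (ψ₁ ψ₂ : ℝ → ℝ) (G : Circle1 → ℝ), Continuous ψ₁ → Continuous ψ₂ →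
      Continuous G → Cone M z ψ₁ → Cone M z ψ₂ → (∫ x in z..z+1, ψ₁ x) = R →
      (∫ x in z..z+1, ψ₂ x) = R → (∀ x, |G x| ≤ Gb) →
      |∫ x in z..z+1, (ψ₁ x - ψ₂ x) * G (itC Ts a N x)| ≤ 2 * R * Gb * θ ^ N := by
  have hM : 0 < M := hM0.trans hMM
  have k0 : 0 ≤ κ := by
    rw [hκ]; exact div_nonneg (mul_nonneg (by linarith) (Real.exp_pos _).le) hM.le
  induction N with
  | zero =>
    intro a z R Gb ψ₁ ψ₂ G h1 h2 hG c1 c2 i1 i2 hb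
    have e : 2 * R * Gb * θ ^ 0 = ∫ x in z..z+1, (ψ₁ x + ψ₂ x) * Gb := by
      rw [intervalIntegral.integral_mul_const, intervalIntegral.integral_add
        (h1.intervalIntegrable _ _) (h2.intervalIntegrable _ _), i1, i2]; ring
    rw [e]
    have hGc : Continuous fun x : ℝ => G x := hG.comp (AddCircle.continuous_mk' 1)
    simp only [itC, id]
    refine abs_int_le (by fun_prop) (by fun_prop) fun x hx => ?_
    rw [abs_mul]
    refine mul_le_mul ?_ (hb _) (abs_nonneg _) (add_nonneg (c1.1 x hx) (c2.1 x hx))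
    rw [abs_le]; constructor <;> linarith [c1.1 x hx, c2.1 x hx]
  | succ N ih =>
    intro a z R Gb ψ₁ ψ₂ G h1 h2 hG c1 c2 i1 i2 hb
    set T := Ts (a+1) with hT
    have hGi : Continuous (fun x => G (itC Ts (a+1) N x)) := hG.comp (itC_cont Ts N (a+1))
    have q1 := PP_cont hlam T h1
    have q2 := PP_cont hlam T h2
    have d1 := PP_cone hlam hA T hM.le c1
    have d2 := PP_cone hlam hA T hM.le c2
    rw [hML] at d1 d2
    have j1 := PP_integral hlam T h1 z
    have j2 := PP_integral hlam T h2 z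
    rw [i1] at j1
    rw [i2] at j2
    have hR : 0 ≤ R := by
      rw [← i1]; exact intervalIntegral.integral_nonneg (by linarith) c1.1
    set c := κ * Real.exp (-M0) * R with hc
    have hc0 : 0 ≤ c := mul_nonneg (mul_nonneg k0 (Real.exp_pos _).le) hR
    have key : ∀ ψ : ℝ → ℝ, Continuous ψ → Cone M0 (T.F z) ψ →
        (∫ x in (T.F z)..(T.F z + 1), ψ x) = R → ∀ x ∈ Icc (T.F z) (T.F z + 1), c ≤ κ * ψ x := by
      intro ψ hψ cψ iψ x hx
      have := cone_lower hM0.le hψ cψ hx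
      rw [iψ] at this
      rw [hc, mul_assoc]
      apply mul_le_mul_of_nonneg_left _ k0
      rw [Real.exp_neg, inv_mul_le_iff₀ (Real.exp_pos _)]
      exact this
    have s1 := cone_sub hM0 hMM hκ d1 (key _ q1 d1 j1)
    have s2 := cone_sub hM0 hMM hκ d2 (key _ q2 d2 j2)
    have si : ∀ ψ : ℝ → ℝ, Continuous ψ → (∫ x in (T.F z)..(T.F z + 1), ψ x) = R →
        (∫ x in (T.F z)..(T.F z + 1), (ψ x - c)) = θ * R := by
      intro ψ hψ iψ
      rw [intervalIntegral.integral_sub (hψ.intervalIntegrable _ _)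
        (continuous_const.intervalIntegrable _ _), iψ, int_const, hc, hθ]; ring
    have fin := ih (a+1) (T.F z) (θ * R) Gb _ _ G (q1.sub continuous_const)
      (q2.sub continuous_const) hG s1 s2 (si _ q1 j1) (si _ q2 j2) hb
    have e1 := PP_int hlam T h1 hGi z
    have e2 := PP_int hlam T h2 hGi z
    have hT' : Continuous fun x : ℝ => G (itC Ts (a+1) N (T.toMap x)) :=
      hGi.comp ((toMap_cont T).comp (AddCircle.continuous_mk' 1))
    have hGi' : Continuous fun x : ℝ => G (itC Ts (a+1) N x) :=
      hGi.comp (AddCircle.continuous_mk' 1)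
    have e3 : ∫ x in z..z+1, (ψ₁ x - ψ₂ x) * G (itC Ts a (N+1) x) =
        ∫ y in (T.F z)..(T.F z + 1), (PP T ψ₁ y - c - (PP T ψ₂ y - c)) *
          G (itC Ts (a+1) N y) := by
      simp only [itC, Function.comp, ← hT, sub_mul, sub_sub_sub_cancel_right]
      have r1 : Continuous fun x : ℝ => ψ₁ x * G (itC Ts (a+1) N (T.toMap x)) := h1.mul hT'
      have r2 : Continuous fun x : ℝ => ψ₂ x * G (itC Ts (a+1) N (T.toMap x)) := h2.mul hT'
      have r3 : Continuous fun x : ℝ => PP T ψ₁ x * G (itC Ts (a+1) N x) := q1.mul hGi'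
      have r4 : Continuous fun x : ℝ => PP T ψ₂ x * G (itC Ts (a+1) N x) := q2.mul hGi'
      rw [intervalIntegral.integral_sub (r1.intervalIntegrable _ _)
        (r2.intervalIntegrable _ _), e1, e2, ← intervalIntegral.integral_sub
        (r3.intervalIntegrable _ _) (r4.intervalIntegrable _ _)]
    rw [e3]
    refine fin.trans (le_of_eq ?_)
    ring

/-- regular signed densities, dominated by an element of the cone -/
def Reg (M c Q z : ℝ) (h : ℝ → ℝ) : Prop :=
  ∃ φ : ℝ → ℝ, Continuous φ ∧ Cone M z φ ∧ (∫ x in z..z+1, φ x) = 1 ∧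
    (∀ x ∈ Icc z (z + 1), |h x| ≤ Q * φ x) ∧
    ∀ x ∈ Icc z (z + 1), ∀ y ∈ Icc z (z + 1), |h x - h y| ≤ Q * c * |x - y| * φ x

lemma cone_weaken {M M' z : ℝ} (h : M ≤ M') {ψ : ℝ → ℝ} (hc : Cone M z ψ) : Cone M' z ψ :=
  ⟨hc.1, fun x hx y hy => (hc.2 x hx y hy).trans
    (mul_le_mul_of_nonneg_right (Real.exp_le_exp.2
      (mul_le_mul_of_nonneg_right h (abs_nonneg _))) (hc.1 y hy))⟩

lemma reg_push (hlam : 1 < lam) (hA : 0 < Astar) {M c Q z : ℝ} (hM : 0 ≤ M)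
    (hML : M / lam + Astar ≤ M) (hc : 0 ≤ c) (hcL : c / lam + Astar * Real.exp M ≤ c)
    (hQ : 0 ≤ Q) (T : CM lam Astar) {h : ℝ → ℝ} (hr : Reg M c Q z h) :
    Reg M c Q (T.F z) (PP T h) := by
  obtain ⟨φ, φc, φM, φi, hb, hl⟩ := hr
  have cPφ := cone_weaken hML (PP_cone hlam hA T hM φM)
  refine ⟨PP T φ, PP_cont hlam T φc, cPφ, (PP_integral hlam T φc z).trans φi, ?_, ?_⟩
  · intro x hx
    unfold PP
    rw [Finset.mul_sum]
    refine (Finset.abs_sum_le_sum_abs _ _).trans (Finset.sum_le_sum fun i hi => ?_)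
    rw [abs_mul, abs_of_pos (wt_pos hlam T _), ← mul_assoc]
    exact mul_le_mul_of_nonneg_right (hb _ (mem_sg hlam T hx hi)) (wt_pos hlam T _).le
  · intro x hx y hy
    have step : |PP T h x - PP T h y| ≤
        Q * (c / lam) * |x - y| * PP T φ x + Q * Astar * |x - y| * PP T φ y := by
      unfold PP
      rw [← Finset.sum_sub_distrib, Finset.mul_sum, Finset.mul_sum, ← Finset.sum_add_distrib]
      refine (Finset.abs_sum_le_sum_abs _ _).trans (Finset.sum_le_sum fun i hi => ?_)
      have mx := mem_sg hlam T hx hi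
      have my := mem_sg hlam T hy hi
      have e3 : x + i - (y + i) = x - y := by ring
      have e4 := sg_lip hlam T (x + i) (y + i)
      have e5 := wt_lip hlam hA T (x + i) (y + i)
      rw [e3] at e4 e5
      have e6 := hl _ mx _ my
      have e7 := hb _ my
      have px := φM.1 _ mx
      have py := φM.1 _ my
      have wx := wt_pos hlam T (x + i)
      have wy := wt_pos hlam T (y + i)
      have split : h (sg T (x + i)) * wt T (x + i) - h (sg T (y + i)) * wt T (y + i) =
          (h (sg T (x + i)) - h (sg T (y + i))) * wt T (x + i) +
          h (sg T (y + i)) * (wt T (x + i) - wt T (y + i)) := by ring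
      rw [split]
      refine (abs_add_le _ _).trans (add_le_add ?_ ?_)
      · rw [abs_mul, abs_of_pos wx]
        calc _ ≤ (Q * c * (|x - y| / lam) * φ (sg T (x + i))) * wt T (x + i) := by
              refine mul_le_mul_of_nonneg_right (e6.trans ?_) wx.le
              exact mul_le_mul_of_nonneg_right (mul_le_mul_of_nonneg_left e4 (by positivity)) px
          _ = _ := by ring
      · rw [abs_mul]
        calc _ ≤ (Q * φ (sg T (y + i))) * (Astar * |x - y| * wt T (y + i)) :=
              mul_le_mul e7 e5 (abs_nonneg _) (by positivity)
          _ = _ := by ring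
    have s2 := cone_exp hM cPφ hy hx
    have s3 := cPφ.1 x hx
    have d0 := abs_nonneg (x - y)
    calc _ ≤ _ := step
      _ ≤ Q * (c / lam) * |x - y| * PP T φ x + Q * Astar * |x - y| * (Real.exp M * PP T φ x) := by
          gcongr
      _ = Q * (c / lam + Astar * Real.exp M) * |x - y| * PP T φ x := by ring
      _ ≤ _ := by gcongr

lemma reg_push_n (hlam : 1 < lam) (hA : 0 < Astar) {M c Q : ℝ} (hM : 0 ≤ M)
    (hML : M / lam + Astar ≤ M) (hc : 0 ≤ c) (hcL : c / lam + Astar * Real.exp M ≤ c)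
    (hQ : 0 ≤ Q) (Ts : ℕ → CM lam Astar) (N : ℕ) : ∀ (a : ℕ) (z : ℝ) (h : ℝ → ℝ), Continuous h →
    Reg M c Q z h → ∃ (z' : ℝ) (h' : ℝ → ℝ), Continuous h' ∧ Reg M c Q z' h' ∧
      ∀ g : Circle1 → ℝ, Continuous g →
        ∫ x in z..z+1, h x * g (itC Ts a N x) = ∫ x in z'..z'+1, h' x * g x := by
  induction N with
  | zero => intro a z h hc hr; exact ⟨z, h, hc, hr, fun g hg => rfl⟩
  | succ N ih =>
    intro a z h hcont hr
    obtain ⟨z', h', c', r', i'⟩ := ih (a+1) _ _ (PP_cont hlam (Ts (a+1)) hcont)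
      (reg_push hlam hA hM hML hc hcL hQ (Ts (a+1)) hr)
    refine ⟨z', h', c', r', fun g hg => ?_⟩
    rw [← i' g hg]
    exact PP_int hlam (Ts (a+1)) hcont (g := fun x => g (itC Ts (a+1) N x))
      (hg.comp (itC_cont Ts N (a+1))) z

lemma reg_mul {M c Q K z : ℝ} (hM : 0 ≤ M) (hc : 1 ≤ c) (hQ : 0 ≤ Q) (hK : 0 ≤ K)
    {h f : ℝ → ℝ} (hf : ∀ x, |f x| ≤ K) (hf' : ∀ x y, |f x - f y| ≤ K * |x - y|)
    (hr : Reg M c Q z h) : Reg M c (Q * (K * (1 + Real.exp M))) z (fun x => f x * h x) := by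
  obtain ⟨φ, φc, φM, φi, hb, hl⟩ := hr
  have E := Real.exp_pos M
  refine ⟨φ, φc, φM, φi, ?_, ?_⟩
  · intro x hx
    have p := φM.1 x hx
    simp only [abs_mul]
    calc _ ≤ K * (Q * φ x) := mul_le_mul (hf x) (hb x hx) (abs_nonneg _) hK
      _ = Q * K * 1 * φ x := by ring
      _ ≤ Q * K * (1 + Real.exp M) * φ x := by gcongr; linarith
      _ = _ := by ring
  · intro x hx y hy
    have p := φM.1 x hx
    have p' := φM.1 y hy
    have s := cone_exp hM φM hy hx
    have split : f x * h x - f y * h y = f x * (h x - h y) + (f x - f y) * h y := by ring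
    simp only
    rw [split]
    have d0 := abs_nonneg (x - y)
    calc _ ≤ |f x * (h x - h y)| + |(f x - f y) * h y| := abs_add_le _ _
      _ ≤ K * (Q * c * |x - y| * φ x) + (K * |x - y|) * (Q * (Real.exp M * φ x)) := by
          rw [abs_mul, abs_mul]
          refine add_le_add (mul_le_mul (hf x) (hl x hx y hy) (abs_nonneg _) hK)
            (mul_le_mul (hf' x y) ((hb y hy).trans ?_) (abs_nonneg _) (by positivity))
          gcongr
      _ = Q * K * |x - y| * φ x * (c + Real.exp M * 1) := by ring
      _ ≤ Q * K * |x - y| * φ x * (c + Real.exp M * c) := by gcongr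
      _ = _ := by ring

/-- decay for a regular signed density -/
lemma decay_reg (hlam : 1 < lam) (hA : 0 < Astar) {M0 M κ θ c : ℝ} (hM0 : 0 < M0) (hMM : M0 < M)
    (hML : M / lam + Astar = M0) (hκ : κ = (M - M0) * Real.exp (-M) / M)
    (hθ : θ = 1 - κ * Real.exp (-M0)) (hθ0 : 0 ≤ θ) (hc : 0 ≤ c) (Ts : ℕ → CM lam Astar) (N a : ℕ)
    {z Q Gb : ℝ} (hQ : 0 ≤ Q) (h : ℝ → ℝ) (G : Circle1 → ℝ) (hh : Continuous h) (hG : Continuous G)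
    (hr : Reg M c Q z h) (hb : ∀ x, |G x| ≤ Gb) :
    |(∫ x in z..z+1, h x * G (itC Ts a N x)) -
      (∫ x in z..z+1, h x) * ∫ x : Circle1, G (itC Ts a N x)| ≤
      2 * (Q * (Real.exp M * (2 + c / M))) * Gb * θ ^ N := by
  have hM : 0 < M := hM0.trans hMM
  obtain ⟨φ, φc, φM, φi, hB, hl⟩ := hr
  have E := Real.exp_pos M
  have up : ∀ x ∈ Icc z (z+1), φ x ≤ Real.exp M := by
    intro x hx
    have := cone_upper hM.le φc φM hx
    rwa [φi, mul_one] at this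
  have b1 : ∀ x ∈ Icc z (z+1), |h x| ≤ Q * Real.exp M := fun x hx =>
    (hB x hx).trans (mul_le_mul_of_nonneg_left (up x hx) hQ)
  have b2 : |∫ x in z..z+1, h x| ≤ Q * Real.exp M := by
    have := abs_int_le hh continuous_const b1
    rwa [int_const] at this
  set I := ∫ x in z..z+1, h x with hI
  set R := Q * Real.exp M + Q * c * Real.exp M / M with hR
  have hlow : 0 ≤ Q * c * Real.exp M / M := by positivity
  have c1 : Cone M z (fun x => h x + R) := by
    constructor
    · intro x hx
      have := (abs_le.1 (b1 x hx)).1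
      simp only; linarith
    · intro x hx y hy
      have h1 := (abs_le.1 (b1 y hy)).1
      have h2 : |h x - h y| ≤ Q * c * |x - y| * Real.exp M :=
        (hl x hx y hy).trans (mul_le_mul_of_nonneg_left (up x hx) (by positivity))
      have h3 := (abs_le.1 h2).2
      have h4 : Q * c * Real.exp M / M ≤ h y + R := by linarith
      have h5 : Q * c * Real.exp M ≤ M * (h y + R) := by
        rw [div_le_iff₀ hM] at h4; linarith
      have h6 := Real.add_one_le_exp (M * |x - y|)
      have h7 : 0 ≤ h y + R := hlow.trans h4
      have d0 := abs_nonneg (x - y)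
      simp only
      nlinarith [mul_le_mul_of_nonneg_right h6 h7, mul_le_mul_of_nonneg_right h5 d0]
  have hI0 : 0 ≤ I + R := by linarith [(abs_le.1 b2).1]
  have c2 : Cone M z (fun _ => I + R) := by
    refine ⟨fun x hx => hI0, fun x hx y hy => ?_⟩
    have : 1 ≤ Real.exp (M * |x - y|) := Real.one_le_exp (by positivity)
    nlinarith
  have i1 : ∫ x in z..z+1, (h x + R) = I + R := by
    rw [intervalIntegral.integral_add (hh.intervalIntegrable _ _)
      (continuous_const.intervalIntegrable _ _), int_const]
  have key := decay hlam hA hM0 hMM hML hκ hθ Ts N a z (I + R) Gb (fun x => h x + R)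
    (fun _ => I + R) G (hh.add continuous_const) continuous_const hG c1 c2 i1 (int_const _ _) hb
  have hGi : Continuous fun x : ℝ => G (itC Ts a N x) :=
    hG.comp ((itC_cont Ts N a).comp (AddCircle.continuous_mk' 1))
  have e : ∫ x in z..z+1, (h x + R - (I + R)) * G (itC Ts a N x) =
      (∫ x in z..z+1, h x * G (itC Ts a N x)) - I * ∫ x : Circle1, G (itC Ts a N x) := by
    rw [← AddCircle.intervalIntegral_preimage 1 z (fun x => G (itC Ts a N x)),
      ← intervalIntegral.integral_const_mul]
    have r1 : Continuous fun x : ℝ => h x * G (itC Ts a N x) := hh.mul hGi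
    have r2 : Continuous fun x : ℝ => I * G (itC Ts a N x) := continuous_const.mul hGi
    rw [← intervalIntegral.integral_sub (r1.intervalIntegrable _ _) (r2.intervalIntegrable _ _)]
    congr 1; ext x; ring
  rw [← e]
  refine key.trans ?_
  have hGb : 0 ≤ Gb := (abs_nonneg _).trans (hb 0)
  have : I + R ≤ Q * (Real.exp M * (2 + c / M)) := by
    have := (abs_le.1 b2).2
    calc I + R ≤ Q * Real.exp M + R := by linarith
      _ = _ := by rw [hR]; ring
  gcongr

lemma arrIter_add (Tarr : ℕ → ℕ → CM lam Astar) (n N : ℕ) : ∀ (a : ℕ) (x : Circle1),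
    arrIter Tarr n (a + N) x = itC (Tarr n) a N (arrIter Tarr n a x) := by
  induction N with
  | zero => intro a x; rfl
  | succ N ih =>
    intro a x
    rw [show a + (N + 1) = (a + 1) + N by ring, ih]
    rfl

lemma arrIter_cont (Tarr : ℕ → ℕ → CM lam Astar) (n a : ℕ) : Continuous (arrIter Tarr n a) := by
  induction a with
  | zero => exact continuous_id
  | succ a ih => exact (toMap_cont _).comp ih

lemma dist_coe_le (x y : ℝ) : dist (x : Circle1) (y : Circle1) ≤ |x - y| := by
  rw [dist_eq_norm, ← AddCircle.coe_sub]
  exact QuotientAddGroup.norm_mk_le_norm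

lemma lip_extract {f : Circle1 → ℝ} {K : ℝ} (h : (∃ Kj : NNReal, LipschitzWith Kj f))
    (hK : lipNorm f ≤ K) :
    Continuous f ∧ (∀ x, |f x| ≤ K) ∧ ∀ x y, |f x - f y| ≤ K * dist x y := by
  obtain ⟨Kj, hj⟩ := h
  have hc := hj.continuous
  have hbdd : BddAbove (range fun x => |f x|) := (isCompact_range hc.abs).bddAbove
  have h1 : ∀ x, |f x| ≤ supNorm f := fun x => le_ciSup hbdd x
  have hs0 : 0 ≤ supNorm f := (abs_nonneg _).trans (h1 0)
  have hne : {L : ℝ | 0 ≤ L ∧ ∀ x y : Circle1, |f x - f y| ≤ L * dist x y}.Nonempty :=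
    ⟨Kj, Kj.2, fun x y => by simpa [Real.dist_eq] using hj.dist_le_mul x y⟩
  have hl0 : 0 ≤ lipConst f := le_csInf hne fun L hL => hL.1
  have h2 : ∀ x y, |f x - f y| ≤ lipConst f * dist x y := by
    intro x y
    rcases eq_or_ne x y with rfl | hxy
    · simp
    · have hd := dist_pos.2 hxy
      rw [← div_le_iff₀ hd]
      exact le_csInf hne fun L hL => by rw [div_le_iff₀ hd]; exact hL.2 x y
  unfold lipNorm at hK
  refine ⟨hc, fun x => (h1 x).trans (by linarith), fun x y => (h2 x y).trans ?_⟩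
  exact mul_le_mul_of_nonneg_right (by linarith) dist_nonneg

lemma coe_zrep (z : Circle1) : ((zrep z : ℝ) : Circle1) = z :=
  (AddCircle.equivIco 1 0).symm_apply_apply z

lemma init {M c L : ℝ} (hM : 0 ≤ M) (hc : 1 ≤ c) (hL : 0 < L) {ρ : Circle1 → ℝ} {z : Circle1}
    (hρ : IsProbDensity ρ) (hl : LipOnArc z L ρ) :
    ∃ (z' : ℝ) (h : ℝ → ℝ), Continuous h ∧ Reg M c (1 + L) z' h ∧
      ∀ g : Circle1 → ℝ, ∫ x : Circle1, g x * ρ x = ∫ x in z'..z'+1, h x * g x := by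
  set r := zrep z with hr
  have ne : ∀ x ∈ Ioo r (r+1), (x : Circle1) ≠ z := by
    intro x hx e
    rw [← coe_zrep z] at e
    have := (AddCircle.coe_eq_coe_iff_of_mem_Ico (p := (1:ℝ)) (a := r)
      ⟨hx.1.le, hx.2⟩ ⟨le_refl r, by linarith⟩).1 e
    linarith [hx.1]
  have co : ∀ x ∈ Ioo r (r+1), arcCoord z (x : Circle1) = x := by
    intro x hx
    exact AddCircle.equivIoc_coe_of_mem (p := (1:ℝ)) (a := r) ⟨hx.1, hx.2.le⟩
  have lipon : LipschitzOnWith (Real.toNNReal L) (fun x : ℝ => ρ x) (Ioo r (r+1)) := by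
    apply LipschitzOnWith.of_dist_le_mul
    intro x hx y hy
    have := hl x y (ne x hx) (ne y hy)
    unfold arcDist at this
    rw [co x hx, co y hy] at this
    rw [Real.dist_eq, Real.dist_eq, Real.coe_toNNReal _ hL.le]
    exact this
  obtain ⟨h, hlip, heq⟩ := lipon.extend_real
  have hh := hlip.continuous
  have rep : ∀ g : Circle1 → ℝ, ∫ x : Circle1, g x * ρ x = ∫ x in r..r+1, h x * g x := by
    intro g
    rw [← AddCircle.intervalIntegral_preimage 1 r (fun x => g x * ρ x),
      intervalIntegral.integral_of_le (by linarith), intervalIntegral.integral_of_le (by linarith),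
      integral_Ioc_eq_integral_Ioo, integral_Ioc_eq_integral_Ioo]
    apply setIntegral_congr_fun measurableSet_Ioo
    intro x hx
    simp only
    rw [← heq hx, mul_comm]
  have int1 : ∫ x in r..r+1, h x = 1 := by
    have := rep (fun _ => 1)
    simp only [one_mul, mul_one] at this
    rw [← this]; exact hρ.2.1
  have lip' : ∀ x y, |h x - h y| ≤ L * |x - y| := by
    intro x y
    have := hlip.dist_le_mul x y
    rwa [Real.dist_eq, Real.dist_eq, Real.coe_toNNReal _ hL.le] at this
  refine ⟨r, h, hh, ⟨fun _ => 1, continuous_const, ⟨fun _ _ => zero_le_one, ?_⟩, int_const _ _,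
    ?_, ?_⟩, rep⟩
  · intro x _ y _
    rw [mul_one]; exact Real.one_le_exp (by positivity)
  · intro x hx
    have e : h x - 1 = ∫ y in r..r+1, (h x - h y) := by
      rw [intervalIntegral.integral_sub (continuous_const.intervalIntegrable _ _)
        (hh.intervalIntegrable _ _), int1, int_const]
    have : |h x - 1| ≤ L := by
      rw [e, ← int_const r L]
      refine abs_int_le (continuous_const.sub hh) continuous_const fun y hy => ?_
      refine (lip' x y).trans ?_
      have : |x - y| ≤ 1 := by rw [abs_le]; constructor <;> linarith [hx.1, hx.2, hy.1, hy.2]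
      nlinarith
    rw [abs_le] at this ⊢
    constructor <;> linarith [this.1, this.2]
  · intro x _ y _
    rw [mul_one]
    refine (lip' x y).trans (mul_le_mul_of_nonneg_right ?_ (abs_nonneg _))
    nlinarith

lemma state (hlam : 1 < lam) (hA : 0 < Astar) {M c L K : ℝ} (hM : 0 ≤ M)
    (hML : M / lam + Astar ≤ M) (hc : 1 ≤ c) (hcL : c / lam + Astar * Real.exp M ≤ c)
    (hL : 0 < L) (hK : 0 ≤ K) (Tarr : ℕ → ℕ → CM lam Astar) {ρ : Circle1 → ℝ} {z : Circle1}
    (hρ : IsProbDensity ρ) (hl : LipOnArc z L ρ) (f : ℕ → Circle1 → ℝ)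
    (hf : ∀ j, Continuous (f j) ∧ (∀ x, |f j x| ≤ K) ∧ ∀ x y, |f j x - f j y| ≤ K * dist x y)
    (n : ℕ) (τ : ℕ → ℕ) (m0 : ℕ) (hτ : ∀ i j, 1 ≤ i → i ≤ j → j ≤ m0 → τ i ≤ τ j) (m : ℕ) :
    m ≤ m0 → ∀ s, (∀ j ∈ Finset.Icc 1 m, τ j ≤ s) → ∃ (z' : ℝ) (h : ℝ → ℝ), Continuous h ∧
      Reg M c ((1 + L) * (K * (1 + Real.exp M)) ^ m) z' h ∧ ∀ g : Circle1 → ℝ, Continuous g →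
        ∫ x : Circle1, (∏ j ∈ Finset.Icc 1 m, f j (arrIter Tarr n (τ j) x)) *
          g (arrIter Tarr n s x) * ρ x = ∫ x in z'..z'+1, h x * g x := by
  have hE := Real.exp_pos M
  induction m with
  | zero =>
    intro _ s _
    obtain ⟨z0, h0, c0, r0, i0⟩ := init hM hc hL hρ hl
    obtain ⟨z1, h1, c1, r1, i1⟩ := reg_push_n hlam hA hM hML (by linarith) hcL
      (by linarith : 0 ≤ 1 + L) (Tarr n) s 0 z0 h0 c0 r0
    refine ⟨z1, h1, c1, by simpa using r1, fun g hg => ?_⟩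
    rw [← i1 g hg, ← i0 (fun x => g (itC (Tarr n) 0 s x))]
    congr 1; ext x
    have := arrIter_add Tarr n s 0 x
    rw [zero_add] at this
    rw [this]; simp [arrIter]
  | succ m ih =>
    intro hm s hs
    obtain ⟨z0, h0, c0, r0, i0⟩ := ih (by omega) (τ (m+1)) (fun j hj => by
      rw [Finset.mem_Icc] at hj
      exact hτ _ _ hj.1 (by omega) hm)
    obtain ⟨fc, fb, fl⟩ := hf (m+1)
    have hQ : 0 ≤ (1 + L) * (K * (1 + Real.exp M)) ^ m := by positivity
    have r0' := reg_mul (f := fun x : ℝ => f (m+1) x) hM hc hQ hK (fun x => fb x)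
      (fun x y => (fl x y).trans (mul_le_mul_of_nonneg_left (dist_coe_le x y) hK)) r0
    have c0' : Continuous fun x : ℝ => f (m+1) x * h0 x :=
      (fc.comp (AddCircle.continuous_mk' 1)).mul c0
    obtain ⟨z1, h1, c1, r1, i1⟩ := reg_push_n hlam hA hM hML (by linarith) hcL
      (by positivity) (Tarr n) (s - τ (m+1)) (τ (m+1)) z0 _ c0' r0'
    refine ⟨z1, h1, c1, by rw [pow_succ, ← mul_assoc]; exact r1, fun g hg => ?_⟩
    have hle : τ (m+1) ≤ s := hs _ (by simp)
    rw [← i1 g hg]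
    have e := i0 (fun x => f (m+1) x * g (itC (Tarr n) (τ (m+1)) (s - τ (m+1)) x))
      (fc.mul (hg.comp (itC_cont _ _ _)))
    have e2 : (fun x : ℝ => f (m+1) x * h0 x * g (itC (Tarr n) (τ (m+1)) (s - τ (m+1)) x)) =
        fun x : ℝ => h0 x * (f (m+1) x * g (itC (Tarr n) (τ (m+1)) (s - τ (m+1)) x)) := by
      ext x; ring
    rw [e2, ← e]
    congr 1; ext x
    have := arrIter_add Tarr n (s - τ (m+1)) (τ (m+1)) x
    rw [Nat.add_sub_cancel' hle] at this
    rw [this, Finset.prod_Icc_succ_top (by omega)]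
    ring

lemma reg_int_le {M c Q z : ℝ} {h : ℝ → ℝ} (hh : Continuous h) (hr : Reg M c Q z h) :
    |∫ x in z..z+1, h x| ≤ Q := by
  obtain ⟨φ, φc, φM, φi, hb, hl⟩ := hr
  have := abs_int_le hh (φc.const_mul Q) hb
  rwa [intervalIntegral.integral_const_mul, φi, mul_one] at this

end Dec

/-- Lemma `lem:dec`.  Exponential decorrelation of multiple observables:
there is `ϑ ∈ (0,1)` such that for `μ` with density Lipschitz on `J_z` with constant `L`,
Lipschitz observables `f⁽¹⁾, …, f⁽ᵏ⁾` with Lipschitz norms bounded by `K`, and times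
`0 ≤ t₁ < ⋯ < t_k ≤ 1`,
`|μ(f⁽¹⁾_{n,⌊nt₁⌋}⋯f⁽ᵏ⁾_{n,⌊nt_k⌋}) − μ(f⁽¹⁾⋯f⁽ᵐ⁾)·μ(f⁽ᵐ⁺¹⁾⋯f⁽ᵏ⁾)| ≤ Cϑ^{n(t_{m+1}−t_m)}`,
where `C` depends only on `k`, the Lipschitz norms, and `L`. -/
theorem statement9 {lam Astar : ℝ} (hlam : 1 < lam) (hA : 0 < Astar)
    (Tarr : ℕ → ℕ → CM lam Astar) :
    ∃ θ : ℝ, θ ∈ Set.Ioo (0 : ℝ) 1 ∧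
      ∀ k : ℕ, 2 ≤ k → ∀ L K : ℝ, 0 < L → 0 ≤ K → ∃ C : ℝ, 0 < C ∧
        ∀ (ρ : Circle1 → ℝ) (z : Circle1), IsProbDensity ρ → LipOnArc z L ρ →
          ∀ f : ℕ → Circle1 → ℝ,
            (∀ j, (∃ Kj : NNReal, LipschitzWith Kj (f j)) ∧ lipNorm (f j) ≤ K) →
          ∀ t : ℕ → ℝ, (∀ j ∈ Finset.Icc 1 k, t j ∈ Set.Icc (0 : ℝ) 1) →
            (∀ i j : ℕ, 1 ≤ i → i < j → j ≤ k → t i < t j) →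
          ∀ m : ℕ, 1 ≤ m → m ≤ k - 1 → ∀ n : ℕ,
            |(∫ x : Circle1,
                (∏ j ∈ Finset.Icc 1 k, f j (arrIter Tarr n ⌊(n : ℝ) * t j⌋₊ x)) * ρ x) -
              (∫ x : Circle1,
                (∏ j ∈ Finset.Icc 1 m, f j (arrIter Tarr n ⌊(n : ℝ) * t j⌋₊ x)) * ρ x) *
              (∫ x : Circle1,
                (∏ j ∈ Finset.Icc (m+1) k, f j (arrIter Tarr n ⌊(n : ℝ) * t j⌋₊ x)) * ρ x)| ≤
              C * θ ^ ((n : ℝ) * (t (m+1) - t m)) := by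
  set M : ℝ := 2 * Astar * lam / (lam - 1) with hMdef
  set M0 : ℝ := M / lam + Astar with hM0def
  have hl1 : 0 < lam - 1 := by linarith
  have hl0 : 0 < lam := by linarith
  have hMpos : 0 < M := by positivity
  have hM0 : 0 < M0 := by positivity
  have hMM : M0 < M := by
    have : M - M0 = Astar := by
      rw [hM0def, hMdef]; field_simp; ring
    linarith
  obtain ⟨κ, hκ⟩ : ∃ κ, κ = (M - M0) * Real.exp (-M) / M := ⟨_, rfl⟩
  have hκ0 : 0 < κ := by
    rw [hκ]; exact div_pos (mul_pos (by linarith) (Real.exp_pos _)) hMpos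
  have hκ1 : κ ≤ 1 := by
    rw [hκ, div_le_one hMpos]
    have : Real.exp (-M) ≤ 1 := Real.exp_le_one_iff.2 (by linarith)
    nlinarith
  obtain ⟨θ, hθ⟩ : ∃ θ, θ = 1 - κ * Real.exp (-M0) := ⟨_, rfl⟩
  have hE0 : Real.exp (-M0) < 1 := Real.exp_lt_one_iff.2 (by linarith)
  have hE1 := Real.exp_pos (-M0)
  have hθ0 : 0 < θ := by rw [hθ]; nlinarith
  have hθ1 : θ < 1 := by rw [hθ]; nlinarith
  obtain ⟨c, hc1, hcL⟩ : ∃ c : ℝ, 1 ≤ c ∧ c / lam + Astar * Real.exp M ≤ c := by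
    refine ⟨1 + Astar * Real.exp M * lam / (lam - 1), ?_, ?_⟩
    · have : 0 ≤ Astar * Real.exp M * lam / (lam - 1) := by positivity
      linarith
    · have e : Astar * Real.exp M * lam / (lam - 1) =
          (Astar * Real.exp M * lam / (lam - 1)) / lam + Astar * Real.exp M := by
        field_simp; ring
      have e2 : 1 / lam ≤ 1 := by rw [div_le_one hl0]; exact hlam.le
      rw [add_div]; linarith
  refine ⟨θ, ⟨hθ0, hθ1⟩, ?_⟩
  intro k hk L K0 hL hK0
  set K := max K0 1 with hKdef
  have hK1 : 1 ≤ K := le_max_right _ _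
  have hKp : 0 < K := by linarith
  have hEM := Real.exp_pos M
  set B := K * (1 + Real.exp M) with hB
  have hB1 : 1 ≤ B := by rw [hB]; nlinarith
  set Qk := (1 + L) * B ^ k with hQk
  have hQkp : 0 < Qk := by positivity
  set D := Real.exp M * (2 + c / M) with hD
  have hDp : 0 < D := by positivity
  refine ⟨(2 * (Qk * D) * K ^ k + Qk * (2 * (Qk * D) * K ^ k)) / θ, by positivity, ?_⟩
  intro ρ z hρ hlip f hf0 t ht htm m hm hmk n
  have hf : ∀ j, Continuous (f j) ∧ (∀ x, |f j x| ≤ K) ∧ ∀ x y, |f j x - f j y| ≤ K * dist x y :=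
    fun j => Dec.lip_extract (hf0 j).1 ((hf0 j).2.trans (le_max_left _ _))
  obtain ⟨τ, hτd⟩ : ∃ τ : ℕ → ℕ, ∀ j, τ j = ⌊(n : ℝ) * t j⌋₊ := ⟨_, fun _ => rfl⟩
  simp only [← hτd]
  have hτ : ∀ i j, 1 ≤ i → i ≤ j → j ≤ k → τ i ≤ τ j := by
    intro i j hi hij hj
    rcases hij.eq_or_lt with rfl | hij
    · exact le_rfl
    rw [hτd, hτd]
    exact Nat.floor_mono (mul_le_mul_of_nonneg_left (htm i j hi hij hj).le (Nat.cast_nonneg n))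
  have hab : τ m ≤ τ (m+1) := hτ _ _ hm (by omega) (by omega)
  set N := τ (m+1) - τ m with hN
  set G : Circle1 → ℝ := fun y =>
    ∏ j ∈ Finset.Icc (m+1) k, f j (Dec.itC (Tarr n) (τ (m+1)) (τ j - τ (m+1)) y) with hG
  have hGc : Continuous G :=
    continuous_finsetProd _ fun j _ => (hf j).1.comp (Dec.itC_cont _ _ _)
  have hGb : ∀ x, |G x| ≤ K ^ k := by
    intro x
    simp only [hG]
    rw [Finset.abs_prod]
    calc _ ≤ ∏ j ∈ Finset.Icc (m+1) k, K :=
          Finset.prod_le_prod (fun _ _ => abs_nonneg _) (fun j _ => (hf j).2.1 _)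
      _ = K ^ (k + 1 - (m + 1)) := by simp
      _ ≤ K ^ k := pow_le_pow_right₀ hK1 (by omega)
  have hGr : ∀ x, ∏ j ∈ Finset.Icc (m+1) k, f j (arrIter Tarr n (τ j) x) =
      G (Dec.itC (Tarr n) (τ m) N (arrIter Tarr n (τ m) x)) := by
    intro x
    simp only [hG]
    apply Finset.prod_congr rfl
    intro j hj
    rw [Finset.mem_Icc] at hj
    rw [← Dec.arrIter_add, hN, Nat.add_sub_cancel' hab, ← Dec.arrIter_add,
      Nat.add_sub_cancel' (hτ _ _ (by omega) hj.1 hj.2)]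
  have hGic : Continuous fun x => G (Dec.itC (Tarr n) (τ m) N x) :=
    hGc.comp (Dec.itC_cont _ _ _)
  have hML : M / lam + Astar ≤ M := hMM.le
  obtain ⟨z1, h1, c1, r1, i1⟩ := Dec.state hlam hA hMpos.le hML hc1 hcL hL hKp.le Tarr hρ hlip f hf
    n τ k hτ m (by omega) (τ m) (fun j hj => by
      rw [Finset.mem_Icc] at hj; exact hτ _ _ hj.1 hj.2 (by omega))
  obtain ⟨z2, h2, c2, r2, i2⟩ := Dec.state hlam hA hMpos.le hML hc1 hcL hL hKp.le Tarr hρ hlip f hf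
    n τ k hτ 0 (by omega) (τ m) (by simp)
  set Qm := (1 + L) * B ^ m with hQm
  have hQmk : Qm ≤ Qk := by
    rw [hQm, hQk]
    exact mul_le_mul_of_nonneg_left (pow_le_pow_right₀ hB1 (by omega)) (by linarith)
  have hQ0k : (1 + L) * B ^ 0 ≤ Qk := by
    rw [hQk]
    exact mul_le_mul_of_nonneg_left (pow_le_pow_right₀ hB1 (by omega)) (by linarith)
  have X1 : ∫ x : Circle1, (∏ j ∈ Finset.Icc 1 k, f j (arrIter Tarr n (τ j) x)) * ρ x =
      ∫ x in z1..z1+1, h1 x * G (Dec.itC (Tarr n) (τ m) N x) := by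
    rw [← i1 _ hGic]
    congr 1; ext x
    rw [← hGr]
    congr 1
    have := Finset.prod_Ico_consecutive (fun j => f j (arrIter Tarr n (τ j) x))
      (by omega : 1 ≤ m + 1) (by omega : m + 1 ≤ k + 1)
    simpa [Finset.Ico_add_one_right_eq_Icc] using this.symm
  have X2 : ∫ x : Circle1, (∏ j ∈ Finset.Icc 1 m, f j (arrIter Tarr n (τ j) x)) * ρ x =
      ∫ x in z1..z1+1, h1 x := by
    have := i1 (fun _ => 1) continuous_const
    simpa using this
  have X3 : ∫ x : Circle1, (∏ j ∈ Finset.Icc (m+1) k, f j (arrIter Tarr n (τ j) x)) * ρ x =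
      ∫ x in z2..z2+1, h2 x * G (Dec.itC (Tarr n) (τ m) N x) := by
    rw [← i2 _ hGic]
    congr 1; ext x
    rw [← hGr]
    simp
  have X4 : ∫ x in z2..z2+1, h2 x = 1 := by
    have := i2 (fun _ => 1) continuous_const
    simp only [mul_one] at this
    rw [← this]
    simpa using hρ.2.1
  have E1 := Dec.decay_reg hlam hA hM0 hMM rfl hκ hθ hθ0.le (by linarith) (Tarr n) N (τ m)
    (by positivity) h1 G c1 hGc r1 hGb
  have E2 := Dec.decay_reg hlam hA hM0 hMM rfl hκ hθ hθ0.le (by linarith) (Tarr n) N (τ m)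
    (by positivity) h2 G c2 hGc r2 hGb
  have E3 := Dec.reg_int_le c1 r1
  rw [X4, one_mul] at E2
  rw [X1, X2, X3]
  set J := ∫ x : Circle1, G (Dec.itC (Tarr n) (τ m) N x)
  set Y1 := ∫ x in z1..z1+1, h1 x * G (Dec.itC (Tarr n) (τ m) N x)
  set Y3 := ∫ x in z2..z2+1, h2 x * G (Dec.itC (Tarr n) (τ m) N x)
  set Y2 := ∫ x in z1..z1+1, h1 x
  have hθN : 0 < θ ^ N := pow_pos hθ0 N
  have F1 : |Y1 - Y2 * J| ≤ 2 * (Qk * D) * K ^ k * θ ^ N := by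
    refine E1.trans ?_
    gcongr
  have F2 : |Y3 - J| ≤ 2 * (Qk * D) * K ^ k * θ ^ N := by
    refine E2.trans ?_
    gcongr
  have F3 : |Y2| ≤ Qk := E3.trans hQmk
  have tot : |Y1 - Y2 * Y3| ≤
      (2 * (Qk * D) * K ^ k + Qk * (2 * (Qk * D) * K ^ k)) * θ ^ N := by
    have e : Y1 - Y2 * Y3 = (Y1 - Y2 * J) + (-(Y2 * (Y3 - J))) := by ring
    rw [e]
    refine (abs_add_le _ _).trans ?_
    rw [abs_neg, abs_mul]
    have := mul_le_mul F3 F2 (abs_nonneg _) hQkp.le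
    nlinarith
  refine tot.trans ?_
  have hpow : θ ^ N ≤ θ ^ ((n : ℝ) * (t (m+1) - t m)) / θ := by
    rw [← Real.rpow_sub_one hθ0.ne', ← Real.rpow_natCast]
    apply Real.rpow_le_rpow_of_exponent_ge hθ0 hθ1.le
    rw [hN, Nat.cast_sub hab]
    have g1 : (n : ℝ) * t (m+1) < τ (m+1) + 1 := by rw [hτd]; exact Nat.lt_floor_add_one _
    have g2 : (τ m : ℝ) ≤ (n : ℝ) * t m := by
      rw [hτd]
      exact Nat.floor_le (mul_nonneg (Nat.cast_nonneg n)
        (ht m (Finset.mem_Icc.2 ⟨hm, by omega⟩)).1)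
    linarith
  calc _ ≤ (2 * (Qk * D) * K ^ k + Qk * (2 * (Qk * D) * K ^ k)) *
        (θ ^ ((n : ℝ) * (t (m+1) - t m)) / θ) := mul_le_mul_of_nonneg_left hpow (by positivity)
    _ = _ := by ring
end
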